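/- arXiv:2310.02243 — 5 statements merged into one kernel-verified Lean document; each statement's English description precedes it below -/
import Mathlib

section
/- Let ε, η ∈ (0,1), κ ≥ 1, and let k, ℓ be positive integers with k ≥ 5/η and ℓ ≥ 100(κ + log(k/ε)). Then both p_{k,ℓ} and q_{k,ℓ} are (κ, η, ε)-flat exponential approximations; that is, for f ∈ {p_{k,ℓ}, q_{k,ℓ}} one has |f(x) − e^x| ≤ ε for all x ∈ [−κ, κ] and |f(x)| ≤ max(1, e^x)·e^{η|x|} for all x ∈ ℝ. -/
open scoped BigOperators

/-- `taylorExp ℓ x = ∑_{k=0}^{ℓ} x^k/k!`, the degree-`ℓ` truncation of the Taylor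
series of `e^x`. -/
noncomputable def taylorExp (ℓ : ℕ) (x : ℝ) : ℝ :=
  ∑ k ∈ Finset.range (ℓ + 1), x ^ k / (Nat.factorial k : ℝ)

/-- `pkl k ℓ x = ∏_{j=1}^{k} s_{2^j ℓ}(x/k)`. -/
noncomputable def pkl (k ℓ : ℕ) (x : ℝ) : ℝ :=
  ∏ j ∈ Finset.Icc 1 k, taylorExp (2 ^ j * ℓ) (x / (k : ℝ))

/-- `qkl k ℓ x = 1 + ∫_0^x pkl k ℓ y dy`. -/
noncomputable def qkl (k ℓ : ℕ) (x : ℝ) : ℝ :=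
  1 + ∫ y in (0:ℝ)..x, pkl k ℓ y

/-!
For `|x| ≤ kℓ/4` every factor `s_{2^j ℓ}(x/k)` has relative error at most `e^{-ℓ}` by Taylor's
theorem, which gives the accuracy of `p_{k,ℓ}`, and of `q_{k,ℓ}` after integration. For `x ≥ 0`
both functions lie between `0` and `e^x`.

For `x < 0` put `t = |x|/k`. The factors of degree `d ≥ et` satisfy `|s_d(-t)| ≤ 1`. The others are
at most `s_d(t)`; the largest of them is at most `e^t`, and Chernoff's bound
`s_d(t) ≤ c^d e^{t/c}`, with `c` doubling whenever `d` halves, shows that the rest multiply to at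
most `2^{et} e^{2t}`. As `e log 2 + 3 < 4.9`, this yields `|p_{k,ℓ}(x)| ≤ e^{4.9t}`. Integrating
costs `q_{k,ℓ}` at most a factor `k`, which `e^{t/10}` absorbs as soon as `|x| ≥ kℓ/4`.
-/

section

open Real Set
open scoped Nat

lemma pow_div_factorial_le_pow {x : ℝ} (hx : 0 ≤ x) (n : ℕ) :
    x ^ n / n ! ≤ (exp 1 * x / n) ^ n := by
  rcases eq_or_ne n 0 with rfl | hn
  · simp
  have hn' : (n : ℝ) ≠ 0 := Nat.cast_ne_zero.2 hn
  calc x ^ n / n ! = (x / n) ^ n * ((n : ℝ) ^ n / n !) := by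
        rw [div_pow, ← mul_div_assoc, div_mul_cancel₀ _ (pow_ne_zero n hn')]
    _ ≤ (x / n) ^ n * exp n := by
        gcongr
        exact pow_div_factorial_le_exp _ n.cast_nonneg n
    _ = (exp 1 * x / n) ^ n := by
        rw [← exp_one_pow n, ← mul_pow]; ring

lemma two_mul_pow_le_add_one_pow {d : ℕ} (hd : d ≠ 0) : 2 * (d : ℝ) ^ d ≤ ((d : ℝ) + 1) ^ d := by
  have hd' : (d : ℝ) ≠ 0 := Nat.cast_ne_zero.2 hd
  have bernoulli : 1 + d * (1 / d : ℝ) ≤ (1 + 1 / d) ^ d :=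
    one_add_mul_le_pow (le_trans (by norm_num) (by positivity : (0 : ℝ) ≤ 1 / d)) d
  calc 2 * (d : ℝ) ^ d = (1 + d * (1 / d : ℝ)) * (d : ℝ) ^ d := by
        rw [mul_one_div_cancel hd']; norm_num
    _ ≤ (1 + 1 / d : ℝ) ^ d * (d : ℝ) ^ d := by gcongr
    _ = ((d : ℝ) + 1) ^ d := by rw [← mul_pow]; congr 1; field_simp

lemma norm_prod_sub_one_le {ι R : Type*} [NormedCommRing R] [NormOneClass R] (s : Finset ι)
    {a : ι → R} {δ : ℝ} (ha : ∀ i ∈ s, ‖a i - 1‖ ≤ δ) (hδ : s.card * δ ≤ 1) :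
    ‖∏ i ∈ s, a i - 1‖ ≤ 2 * (s.card * δ) := by
  set S := ∑ i ∈ s, ‖a i - 1‖
  have hS₀ : 0 ≤ S := Finset.sum_nonneg fun _ _ ↦ norm_nonneg _
  have hS : S ≤ s.card * δ := by
    simpa only [nsmul_eq_mul] using Finset.sum_le_card_nsmul s _ δ ha
  calc ‖∏ i ∈ s, a i - 1‖ ≤ exp S - 1 := by
        simpa only [add_sub_cancel] using s.norm_prod_one_add_sub_one_le fun i ↦ a i - 1
    _ ≤ |exp S - 1| := le_abs_self _
    _ ≤ 2 * |S| := abs_exp_sub_one_le (by rw [abs_of_nonneg hS₀]; exact hS.trans hδ)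
    _ ≤ 2 * (s.card * δ) := by rw [abs_of_nonneg hS₀]; gcongr

lemma taylorExp_nonneg (d : ℕ) {t : ℝ} (ht : 0 ≤ t) : 0 ≤ taylorExp d t := by
  unfold taylorExp
  positivity

lemma taylorExp_le_exp (d : ℕ) {t : ℝ} (ht : 0 ≤ t) : taylorExp d t ≤ exp t :=
  sum_le_exp_of_nonneg ht _

@[simp]
lemma taylorExp_zero (d : ℕ) : taylorExp d 0 = 1 := by
  simp [taylorExp, Finset.sum_range_succ']

lemma continuous_taylorExp (d : ℕ) : Continuous (taylorExp d) := by
  unfold taylorExp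
  fun_prop

lemma abs_taylorExp_le (d : ℕ) (y : ℝ) : |taylorExp d y| ≤ taylorExp d |y| := by
  simpa only [taylorExp, abs_div, abs_pow, Nat.abs_cast] using
    Finset.abs_sum_le_sum_abs (fun m ↦ y ^ m / (m ! : ℝ)) (Finset.range (d + 1))

lemma taylorExp_le_pow_mul_exp (d : ℕ) {t c : ℝ} (ht : 0 ≤ t) (hc : 1 ≤ c) :
    taylorExp d t ≤ c ^ d * exp (t / c) := by
  have hc₀ : 0 < c := one_pos.trans_le hc
  -- Chernoff's argument: `t ^ m ≤ c ^ d * (t / c) ^ m` for every `m ≤ d`.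
  calc taylorExp d t
    _ ≤ ∑ m ∈ Finset.range (d + 1), c ^ d * ((t / c) ^ m / m !) := by
        refine Finset.sum_le_sum fun m hm ↦ ?_
        have hmd : m ≤ d := Nat.lt_succ_iff.1 (Finset.mem_range.1 hm)
        calc t ^ m / m ! = c ^ m * ((t / c) ^ m / m !) := by
              rw [← mul_div_assoc, ← mul_pow, mul_div_cancel₀ _ hc₀.ne']
          _ ≤ c ^ d * ((t / c) ^ m / m !) := by gcongr
    _ = c ^ d * taylorExp d (t / c) := by rw [taylorExp, Finset.mul_sum]
    _ ≤ c ^ d * exp (t / c) := by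
        gcongr
        exact taylorExp_le_exp d (by positivity)

lemma taylorWithinEval_exp_zero (d : ℕ) {x : ℝ} (hx : 0 ≠ x) :
    taylorWithinEval exp d (uIcc 0 x) 0 x = taylorExp d x := by
  rw [taylor_within_apply, taylorExp]
  refine Finset.sum_congr rfl fun m _ ↦ ?_
  rw [iteratedDerivWithin_eq_iteratedDeriv (uniqueDiffOn_uIcc hx) contDiff_exp.contDiffAt
    left_mem_uIcc, iteratedDeriv_eq_iterate, iter_deriv_exp, exp_zero, sub_zero, smul_eq_mul,
    mul_one, inv_mul_eq_div]

lemma exists_exp_sub_taylorExp_eq (d : ℕ) {x : ℝ} (hx : 0 ≠ x) :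
    ∃ ξ ∈ uIoo 0 x, exp x - taylorExp d x = exp ξ * x ^ (d + 1) / (d + 1)! := by
  obtain ⟨ξ, hξ, h⟩ :=
    taylor_mean_remainder_lagrange_iteratedDeriv (n := d) hx contDiff_exp.contDiffOn
  rw [taylorWithinEval_exp_zero d hx, iteratedDeriv_eq_iterate, iter_deriv_exp, sub_zero] at h
  exact ⟨ξ, hξ, h⟩

lemma abs_taylorExp_sub_exp_le (d : ℕ) (x : ℝ) :
    |taylorExp d x - exp x| ≤
      max 1 (exp x) * (exp 1 * |x| / (d + 1 : ℕ)) ^ (d + 1) := by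
  rcases eq_or_ne 0 x with rfl | hx
  · simp
  obtain ⟨ξ, hξ, h⟩ := exists_exp_sub_taylorExp_eq d hx
  have hξx : exp ξ ≤ max 1 (exp x) := by
    rw [← exp_zero, ← exp_monotone.map_max]
    exact exp_le_exp.2 hξ.2.le
  calc |taylorExp d x - exp x| = exp ξ * (|x| ^ (d + 1) / (d + 1)!) := by
        rw [abs_sub_comm, h, abs_div, abs_mul, abs_pow, abs_exp, Nat.abs_cast, mul_div_assoc]
    _ ≤ max 1 (exp x) * (exp 1 * |x| / (d + 1 : ℕ)) ^ (d + 1) := by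
        gcongr
        exact pow_div_factorial_le_pow (abs_nonneg x) (d + 1)

lemma abs_taylorExp_sub_exp_le_exp_neg {d : ℕ} {x : ℝ} (hx : exp 2 * |x| ≤ d + 1) :
    |taylorExp d x - exp x| ≤ max 1 (exp x) * exp (-(d + 1)) := by
  have hbase : exp 1 * |x| / (d + 1 : ℕ) ≤ exp (-1) := by
    rw [div_le_iff₀ (by positivity), Nat.cast_succ]
    calc exp 1 * |x| = exp (-1) * (exp 2 * |x|) := by
          rw [← mul_assoc, ← exp_add]; norm_num
      _ ≤ exp (-1) * (d + 1) := by gcongr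
  calc |taylorExp d x - exp x|
    _ ≤ max 1 (exp x) * (exp 1 * |x| / (d + 1 : ℕ)) ^ (d + 1) := abs_taylorExp_sub_exp_le d x
    _ ≤ max 1 (exp x) * exp (-1) ^ (d + 1) := by gcongr
    _ = max 1 (exp x) * exp (-(d + 1)) := by
        rw [← exp_nat_mul, Nat.cast_succ, mul_neg_one]

lemma exp_two_le_eight : exp 2 ≤ 8 := by
  have h : exp 1 ^ 2 = exp 2 := by rw [← exp_nat_mul]; norm_num
  nlinarith [exp_one_lt_d9, exp_pos 1]

lemma abs_taylorExp_div_exp_sub_one_le {d : ℕ} {r y : ℝ} (hd : 2 * r ≤ d) (hy : |y| ≤ r / 4) :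
    |taylorExp d y / exp y - 1| ≤ exp (-r) := by
  have hdy : exp 2 * |y| ≤ d + 1 := by
    linarith [mul_le_mul_of_nonneg_right exp_two_le_eight (abs_nonneg y)]
  have hmax : max 1 (exp y) ≤ exp |y| * exp y := by
    rw [← exp_add]
    exact max_le (one_le_exp (by linarith [neg_abs_le y]))
      (exp_le_exp.2 (by linarith [abs_nonneg y]))
  rw [div_sub_one (exp_ne_zero y), abs_div, abs_exp, div_le_iff₀ (exp_pos y)]
  calc |taylorExp d y - exp y|
    _ ≤ max 1 (exp y) * exp (-(d + 1)) := abs_taylorExp_sub_exp_le_exp_neg hdy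
    _ ≤ exp |y| * exp y * exp (-(d + 1)) := by gcongr
    _ = exp (|y| - (d + 1)) * exp y := by rw [mul_right_comm, ← exp_add, ← sub_eq_add_neg]
    _ ≤ exp (-r) * exp y := by
        gcongr
        linarith [abs_nonneg y]

lemma exp_neg_le_inv_one_add {t : ℝ} (ht : 0 ≤ t) : exp (-t) ≤ (1 + t)⁻¹ := by
  rw [exp_neg]
  gcongr
  linarith [add_one_le_exp t]

lemma abs_taylorExp_neg_le_one {d : ℕ} {t : ℝ} (ht : 0 ≤ t) (htd : exp 1 * t ≤ d) :
    |taylorExp d (-t)| ≤ 1 := by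
  rcases eq_or_ne d 0 with rfl | hd
  · simp [taylorExp]
  have hpow : ((d : ℝ) / (d + 1)) ^ d ≤ 1 / 2 := by
    rw [div_pow, div_le_iff₀ (by positivity)]
    linarith [two_mul_pow_le_add_one_pow hd]
  have hremainder : |taylorExp d (-t) - exp (-t)| ≤ t / (1 + t) := by
    calc |taylorExp d (-t) - exp (-t)|
      _ ≤ (exp 1 * t / (d + 1)) ^ (d + 1) := by
          simpa [ht, abs_of_nonneg] using abs_taylorExp_sub_exp_le d (-t)
      _ = (exp 1 * t / (d + 1)) ^ d * (exp 1 * t / (d + 1)) := pow_succ _ _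
      _ ≤ (d / (d + 1)) ^ d * (exp 1 * t / (d + 1)) := by gcongr
      _ ≤ 1 / 2 * (exp 1 * t / (d + 1)) := by gcongr
      _ ≤ t / (1 + t) := by
          have hed : exp 1 * (1 + t) ≤ 2 * (d + 1) := by
            have : (1 : ℝ) ≤ d := Nat.one_le_cast.2 (Nat.one_le_iff_ne_zero.2 hd)
            linarith [exp_one_lt_three]
          rw [one_div_mul_eq_div, div_div, div_le_div_iff₀ (by positivity) (by positivity)]
          linarith [mul_le_mul_of_nonneg_left hed ht]
  calc |taylorExp d (-t)| ≤ |taylorExp d (-t) - exp (-t)| + |exp (-t)| := by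
        simpa using abs_add_le (taylorExp d (-t) - exp (-t)) (exp (-t))
    _ ≤ t / (1 + t) + (1 + t)⁻¹ := by
        rw [abs_exp]
        exact add_le_add hremainder (exp_neg_le_inv_one_add ht)
    _ = 1 := by field_simp; ring

lemma prod_taylorExp_two_pow_le (ℓ N : ℕ) {t c : ℝ} (ht : 0 ≤ t) (hc : 1 ≤ c) :
    ∏ j ∈ Finset.Icc 1 N, taylorExp (2 ^ j * ℓ) t ≤
      (2 * c) ^ (2 ^ (N + 1) * ℓ) * exp (2 * t / c) := by
  -- Each halving of the degree lets Chernoff's parameter double, and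
  -- `t / c + t / (2 * c) + ⋯ ≤ 2 * t / c`.
  induction N generalizing c with
  | zero =>
    simpa using one_le_mul_of_one_le_of_one_le (one_le_pow₀ (by linarith : 1 ≤ 2 * c))
      (one_le_exp (by positivity : 0 ≤ 2 * t / c))
  | succ N ih =>
    set M := 2 ^ (N + 1) * ℓ with hM
    have hM₂ : 2 ^ (N + 1 + 1) * ℓ = 2 * M := by rw [hM]; ring
    calc ∏ j ∈ Finset.Icc 1 (N + 1), taylorExp (2 ^ j * ℓ) t
      _ = (∏ j ∈ Finset.Icc 1 N, taylorExp (2 ^ j * ℓ) t) * taylorExp M t :=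
          Finset.prod_Icc_succ_top (by lia) _
      _ ≤ ((2 * (2 * c)) ^ M * exp (2 * t / (2 * c))) * (c ^ M * exp (t / c)) := by
          gcongr
          · exact taylorExp_nonneg M ht
          · exact ih (by linarith)
          · exact taylorExp_le_pow_mul_exp M ht hc
      _ = (2 * (2 * c) * c) ^ M * (exp (t / c) * exp (t / c)) := by
          rw [mul_div_mul_left t c two_ne_zero, mul_pow _ c]; ring
      _ = (2 * c) ^ (2 ^ (N + 1 + 1) * ℓ) * exp (2 * t / c) := by
          rw [hM₂, pow_mul (2 * c) 2 M, ← exp_add, ← two_mul, mul_div_assoc]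
          congr 2
          ring

lemma prod_taylorExp_two_pow_le_exp (ℓ N : ℕ) {t : ℝ} (ht : 0 ≤ t)
    (hN : (2 ^ (N + 1) * ℓ : ℕ) ≤ exp 1 * t) :
    ∏ j ∈ Finset.Icc 1 (N + 1), taylorExp (2 ^ j * ℓ) t ≤ exp (49 / 10 * t) := by
  set M := 2 ^ (N + 1) * ℓ
  have hlog : M * log 2 ≤ 19 / 10 * t := by
    calc M * log 2 ≤ exp 1 * t * log 2 := by gcongr
      _ ≤ 2.7182818286 * t * 0.6931471808 := by
          gcongr
          · exact exp_one_lt_d9.le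
          · exact log_two_lt_d9.le
      _ ≤ 19 / 10 * t := by linarith
  calc ∏ j ∈ Finset.Icc 1 (N + 1), taylorExp (2 ^ j * ℓ) t
    _ = (∏ j ∈ Finset.Icc 1 N, taylorExp (2 ^ j * ℓ) t) * taylorExp M t :=
        Finset.prod_Icc_succ_top (by lia) _
    _ ≤ (2 ^ M * exp (2 * t)) * exp t := by
        gcongr
        · exact taylorExp_nonneg M ht
        · simpa using prod_taylorExp_two_pow_le ℓ N ht le_rfl
        · exact taylorExp_le_exp M ht
    _ = exp (M * log 2 + 2 * t + t) := by
        rw [exp_add, exp_add, exp_nat_mul, exp_log two_pos]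
    _ ≤ exp (49 / 10 * t) := exp_le_exp.2 (by linarith)

lemma prod_abs_taylorExp_neg_le (ℓ N : ℕ) {t : ℝ} (ht : 0 ≤ t) :
    ∏ j ∈ Finset.Icc 1 N, |taylorExp (2 ^ j * ℓ) (-t)| ≤ exp (49 / 10 * t) := by
  induction N with
  | zero => simpa using ht
  | succ N ih =>
    rcases le_total (exp 1 * t) (2 ^ (N + 1) * ℓ : ℕ) with hsmall | hlarge
    · rw [Finset.prod_Icc_succ_top (by lia)]
      exact (mul_le_of_le_one_right (by positivity) (abs_taylorExp_neg_le_one ht hsmall)).trans ih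
    · calc ∏ j ∈ Finset.Icc 1 (N + 1), |taylorExp (2 ^ j * ℓ) (-t)|
        _ ≤ ∏ j ∈ Finset.Icc 1 (N + 1), taylorExp (2 ^ j * ℓ) t := by
            gcongr with j
            simpa [abs_of_nonneg ht] using abs_taylorExp_le (2 ^ j * ℓ) (-t)
        _ ≤ exp (49 / 10 * t) := prod_taylorExp_two_pow_le_exp ℓ N ht hlarge

lemma continuous_pkl (k ℓ : ℕ) : Continuous (pkl k ℓ) := by
  unfold pkl
  exact continuous_finsetProd _ fun _ _ ↦ (continuous_taylorExp _).comp (by fun_prop)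

section Bounds

variable {k ℓ : ℕ} {x : ℝ}

lemma exp_div_pow_self (hk : 0 < k) : exp (x / k) ^ k = exp x := by
  rw [← exp_nat_mul, mul_div_cancel₀ x (Nat.cast_ne_zero.2 hk.ne')]

lemma pkl_nonneg (hx : 0 ≤ x) : 0 ≤ pkl k ℓ x :=
  Finset.prod_nonneg fun _ _ ↦ taylorExp_nonneg _ (by positivity)

lemma pkl_le_exp (hk : 0 < k) (hx : 0 ≤ x) : pkl k ℓ x ≤ exp x := by
  have hxk : 0 ≤ x / k := by positivity
  calc pkl k ℓ x ≤ ∏ _j ∈ Finset.Icc 1 k, exp (x / k) :=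
        Finset.prod_le_prod (fun _ _ ↦ taylorExp_nonneg _ hxk) fun _ _ ↦ taylorExp_le_exp _ hxk
    _ = exp x := by rw [Finset.prod_const, Nat.card_Icc, Nat.add_sub_cancel, exp_div_pow_self hk]

lemma abs_pkl_le_of_nonpos (hx : x ≤ 0) : |pkl k ℓ x| ≤ exp (49 / 10 / k * |x|) := by
  have hxk : x / k = -(|x| / k) := by rw [abs_of_nonpos hx]; ring
  rw [pkl, Finset.abs_prod, hxk, div_mul_eq_mul_div, mul_div_assoc]
  exact prod_abs_taylorExp_neg_le ℓ k (by positivity)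

lemma abs_pkl_sub_exp_le (hk : 0 < k) (hkℓ : k * exp (-ℓ) ≤ 1) (hx : |x| ≤ k * ℓ / 4) :
    |pkl k ℓ x - exp x| ≤ 2 * (k * exp (-ℓ)) * exp x := by
  have hy : |x / k| ≤ ℓ / 4 := by
    rw [abs_div, Nat.abs_cast, div_le_iff₀ (by positivity)]
    linarith
  have hfactor : ∀ j ∈ Finset.Icc 1 k,
      ‖taylorExp (2 ^ j * ℓ) (x / k) / exp (x / k) - 1‖ ≤ exp (-ℓ) := fun j hj ↦ by
    have hdeg : 2 * ℓ ≤ 2 ^ j * ℓ :=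
      Nat.mul_le_mul_right ℓ (Nat.le_pow (Finset.mem_Icc.1 hj).1)
    exact abs_taylorExp_div_exp_sub_one_le (mod_cast hdeg) hy
  have hprod : ∏ j ∈ Finset.Icc 1 k, taylorExp (2 ^ j * ℓ) (x / k) / exp (x / k) =
      pkl k ℓ x / exp x := by
    rw [Finset.prod_div_distrib, Finset.prod_const, Nat.card_Icc, Nat.add_sub_cancel,
      exp_div_pow_self hk, pkl]
  have hratio := norm_prod_sub_one_le (Finset.Icc 1 k) hfactor (by simpa using hkℓ)
  rwa [hprod, Nat.card_Icc, Nat.add_sub_cancel, div_sub_one (exp_ne_zero x), norm_eq_abs, abs_div,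
    abs_exp, div_le_iff₀ (exp_pos x)] at hratio

lemma qkl_sub_exp :
    qkl k ℓ x - exp x = ∫ y in (0 : ℝ)..x, (pkl k ℓ y - exp y) := by
  rw [intervalIntegral.integral_sub ((continuous_pkl k ℓ).intervalIntegrable _ _)
    (continuous_exp.intervalIntegrable _ _), integral_exp, exp_zero, qkl]
  ring

lemma qkl_nonneg (hx : 0 ≤ x) : 0 ≤ qkl k ℓ x :=
  add_nonneg zero_le_one (intervalIntegral.integral_nonneg hx fun _ hy ↦ pkl_nonneg hy.1)

lemma qkl_le_exp (hk : 0 < k) (hx : 0 ≤ x) : qkl k ℓ x ≤ exp x := by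
  have h : ∫ y in (0 : ℝ)..x, pkl k ℓ y ≤ ∫ y in (0 : ℝ)..x, exp y :=
    intervalIntegral.integral_mono_on hx ((continuous_pkl k ℓ).intervalIntegrable _ _)
      (continuous_exp.intervalIntegrable _ _) fun y hy ↦ pkl_le_exp hk hy.1
  rw [integral_exp, exp_zero] at h
  rw [qkl]
  linarith

lemma abs_qkl_sub_exp_le (hk : 0 < k) (hkℓ : k * exp (-ℓ) ≤ 1) (hx : |x| ≤ k * ℓ / 4) :
    |qkl k ℓ x - exp x| ≤ 2 * (k * exp (-ℓ)) * |exp x - 1| := by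
  have hpkl : ∀ y ∈ uIoc 0 x, ‖pkl k ℓ y - exp y‖ ≤ 2 * (k * exp (-ℓ)) * exp y := fun y hy ↦ by
    have hyx : |y| ≤ |x| := by
      simpa using abs_sub_left_of_mem_uIcc (uIoc_subset_uIcc hy)
    exact abs_pkl_sub_exp_le hk hkℓ (hyx.trans hx)
  calc |qkl k ℓ x - exp x| = ‖∫ y in (0 : ℝ)..x, (pkl k ℓ y - exp y)‖ := by
        rw [qkl_sub_exp, norm_eq_abs]
    _ ≤ |∫ y in (0 : ℝ)..x, 2 * (k * exp (-ℓ)) * exp y| :=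
        intervalIntegral.norm_integral_le_abs_of_norm_le
          ((MeasureTheory.ae_restrict_mem measurableSet_uIoc).mono hpkl)
          (Continuous.intervalIntegrable (by fun_prop) _ _)
    _ = 2 * (k * exp (-ℓ)) * |exp x - 1| := by
        rw [intervalIntegral.integral_const_mul, integral_exp, exp_zero, abs_mul,
          abs_of_nonneg (by positivity)]

lemma abs_integral_exp_neg_mul {a : ℝ} (ha : 0 < a) (hx : x ≤ 0) :
    |∫ y in (0 : ℝ)..x, exp (-a * y)| = a⁻¹ * (exp (a * |x|) - 1) := by
  have hexp : 0 ≤ exp (a * |x|) - 1 := sub_nonneg.2 (one_le_exp (by positivity))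
  rw [intervalIntegral.integral_comp_mul_left exp (neg_ne_zero.2 ha.ne'), integral_exp, mul_zero,
    exp_zero, neg_mul, ← mul_neg, ← abs_of_nonpos hx, smul_eq_mul, abs_mul, abs_inv, abs_neg,
    abs_of_pos ha, abs_of_nonneg hexp]

lemma abs_qkl_le_of_nonpos (hk : 0 < k) (hx : x ≤ 0) :
    |qkl k ℓ x| ≤ k * exp (49 / 10 / k * |x|) := by
  have hk₁ : (1 : ℝ) ≤ k := Nat.one_le_cast.2 hk
  set a : ℝ := 49 / 10 / k with ha
  have ha₀ : 0 < a := by positivity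
  have ha_inv : a⁻¹ ≤ k := by
    rw [ha, inv_div]
    linarith
  have hexp : 0 ≤ exp (a * |x|) - 1 := sub_nonneg.2 (one_le_exp (by positivity))
  have hpkl : ∀ y ∈ uIoc 0 x, ‖pkl k ℓ y‖ ≤ exp (-a * y) := fun y hy ↦ by
    rw [uIoc_of_ge hx] at hy
    rw [neg_mul, ← mul_neg, ← abs_of_nonpos hy.2]
    exact abs_pkl_le_of_nonpos hy.2
  have hintegral : ‖∫ y in (0 : ℝ)..x, pkl k ℓ y‖ ≤ a⁻¹ * (exp (a * |x|) - 1) := by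
    rw [← abs_integral_exp_neg_mul ha₀ hx]
    exact intervalIntegral.norm_integral_le_abs_of_norm_le
      ((MeasureTheory.ae_restrict_mem measurableSet_uIoc).mono hpkl)
      (Continuous.intervalIntegrable (by fun_prop) _ _)
  calc |qkl k ℓ x| ≤ |1| + ‖∫ y in (0 : ℝ)..x, pkl k ℓ y‖ := abs_add_le _ _
    _ ≤ 1 + a⁻¹ * (exp (a * |x|) - 1) := by rw [abs_one]; gcongr
    _ ≤ k + k * (exp (a * |x|) - 1) := by gcongr
    _ = k * exp (a * |x|) := by ring

lemma abs_qkl_le_exp_of_nonpos (hk : 0 < k) (hkℓ : 2 * (k * exp (-ℓ)) ≤ 1)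
    (hlog : log k ≤ ℓ / 40) (hx : x ≤ 0) : |qkl k ℓ x| ≤ exp (5 / k * |x|) := by
  have hk₀ : (0 : ℝ) < k := Nat.cast_pos.2 hk
  -- Near the origin the relative error is below `1`; farther out the slack between the rates
  -- `4.9 / k` and `5 / k` absorbs the factor `k`.
  rcases le_total |x| (k * ℓ / 4) with hnear | hfar
  · have hx₁ : exp x ≤ 1 := exp_le_one_iff.2 hx
    have herr : |qkl k ℓ x - exp x| ≤ 1 - exp x := by
      calc |qkl k ℓ x - exp x| ≤ 2 * (k * exp (-ℓ)) * |exp x - 1| :=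
            abs_qkl_sub_exp_le hk (by linarith [exp_pos (-(ℓ : ℝ))]) hnear
        _ ≤ 1 * |exp x - 1| := by gcongr
        _ = 1 - exp x := by rw [one_mul, abs_of_nonpos (by linarith), neg_sub]
    calc |qkl k ℓ x| ≤ 1 := abs_le.2 (by constructor <;> linarith [abs_le.1 herr, exp_pos x])
      _ ≤ exp (5 / k * |x|) := one_le_exp (by positivity)
  · have hslack : log k ≤ 1 / 10 / k * |x| := by
      calc log k ≤ ℓ / 40 := hlog
        _ = 1 / 10 / k * (k * ℓ / 4) := by field_simp; ring
        _ ≤ 1 / 10 / k * |x| := by gcongr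
    calc |qkl k ℓ x| ≤ k * exp (49 / 10 / k * |x|) := abs_qkl_le_of_nonpos hk hx
      _ = exp (log k + 49 / 10 / k * |x|) := by rw [exp_add, exp_log hk₀]
      _ ≤ exp (1 / 10 / k * |x| + 49 / 10 / k * |x|) := by gcongr
      _ = exp (5 / k * |x|) := by ring_nf

end Bounds

/-- `f` is a `(κ, η, ε)`-flat exponential approximation: it is `ε`-close to `exp` on `[-κ, κ]` and
exceeds `max 1 exp` by a factor of at most `exp (η * |x|)` on the whole line. The paper
asks `f` to be a polynomial; here it may be any function. -/
structure IsFlatExpApprox (κ η ε : ℝ) (f : ℝ → ℝ) : Prop where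
  abs_sub_exp_le : ∀ x ∈ Icc (-κ) κ, |f x - exp x| ≤ ε
  abs_le_max_mul_exp : ∀ x, |f x| ≤ max 1 (exp x) * exp (η * |x|)

namespace IsFlatExpApprox

variable {κ η η' ε : ℝ} {f : ℝ → ℝ}

lemma mono (h : IsFlatExpApprox κ η ε f) (hη : η ≤ η') : IsFlatExpApprox κ η' ε f where
  abs_sub_exp_le := h.abs_sub_exp_le
  abs_le_max_mul_exp x := (h.abs_le_max_mul_exp x).trans (by gcongr)

lemma of_abs_le (hη : 0 ≤ η) (herr : ∀ x ∈ Icc (-κ) κ, |f x - exp x| ≤ ε)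
    (hpos : ∀ x, 0 ≤ x → |f x| ≤ exp x) (hneg : ∀ x ≤ 0, |f x| ≤ exp (η * |x|)) :
    IsFlatExpApprox κ η ε f where
  abs_sub_exp_le := herr
  abs_le_max_mul_exp x := by
    have hexp : 1 ≤ exp (η * |x|) := one_le_exp (by positivity)
    rcases le_total 0 x with hx | hx
    · calc |f x| ≤ exp x * 1 := by simpa using hpos x hx
        _ ≤ max 1 (exp x) * exp (η * |x|) := by gcongr; exact le_max_right _ _
    · calc |f x| ≤ 1 * exp (η * |x|) := by simpa using hneg x hx
        _ ≤ max 1 (exp x) * exp (η * |x|) := by gcongr; exact le_max_left _ _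

end IsFlatExpApprox

section Flatness

variable {κ ε : ℝ} {k ℓ : ℕ}

lemma isFlatExpApprox_pkl (hk : 0 < k) (hκ : κ ≤ k * ℓ / 4) (hkℓ : k * exp (-ℓ) ≤ 1)
    (hε : 2 * (k * exp (-ℓ)) * exp κ ≤ ε) : IsFlatExpApprox κ (5 / k) ε (pkl k ℓ) := by
  refine .of_abs_le (by positivity) (fun x hx ↦ ?_) (fun x hx ↦ ?_) fun x hx ↦ ?_
  · calc |pkl k ℓ x - exp x| ≤ 2 * (k * exp (-ℓ)) * exp x :=
          abs_pkl_sub_exp_le hk hkℓ ((abs_le.2 hx).trans hκ)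
      _ ≤ 2 * (k * exp (-ℓ)) * exp κ := by gcongr; exact hx.2
      _ ≤ ε := hε
  · rw [abs_of_nonneg (pkl_nonneg hx)]
    exact pkl_le_exp hk hx
  · exact (abs_pkl_le_of_nonpos hx).trans (by gcongr; norm_num)

lemma isFlatExpApprox_qkl (hk : 0 < k) (hκ : κ ≤ k * ℓ / 4) (hkℓ : 2 * (k * exp (-ℓ)) ≤ 1)
    (hlog : log k ≤ ℓ / 40) (hε : 2 * (k * exp (-ℓ)) * exp κ ≤ ε) :
    IsFlatExpApprox κ (5 / k) ε (qkl k ℓ) := by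
  refine .of_abs_le (by positivity) (fun x hx ↦ ?_) (fun x hx ↦ ?_) fun x hx ↦ ?_
  · have hexp : |exp x - 1| ≤ exp κ := by
      have hκ₀ : 0 ≤ κ := by linarith [hx.1.trans hx.2]
      exact abs_sub_le_of_nonneg_of_le (exp_nonneg x) (exp_le_exp.2 hx.2) zero_le_one
        (one_le_exp hκ₀)
    calc |qkl k ℓ x - exp x| ≤ 2 * (k * exp (-ℓ)) * |exp x - 1| :=
          abs_qkl_sub_exp_le hk (by linarith [exp_pos (-(ℓ : ℝ))]) ((abs_le.2 hx).trans hκ)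
      _ ≤ 2 * (k * exp (-ℓ)) * exp κ := by gcongr
      _ ≤ ε := hε
  · rw [abs_of_nonneg (qkl_nonneg hx)]
    exact qkl_le_exp hk hx
  · exact abs_qkl_le_exp_of_nonpos hk hkℓ hlog hx

lemma two_mul_mul_exp_neg_mul_exp_le {a r : ℝ} (ha : 0 < a) (hε : 0 < ε)
    (hr : κ + 1 + log (a / ε) ≤ r) : 2 * (a * exp (-r)) * exp κ ≤ ε := by
  have htwo : 2 ≤ exp 1 := by linarith [add_one_le_exp 1]
  calc 2 * (a * exp (-r)) * exp κ ≤ exp 1 * (a * exp (-r)) * exp κ := by gcongr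
    _ = a * exp (κ + 1 - r) := by rw [exp_sub, exp_add, exp_neg]; ring
    _ ≤ a * exp (-log (a / ε)) := by gcongr; linarith
    _ = ε := by
        rw [exp_neg, exp_log (by positivity), inv_div, mul_div_cancel₀ ε ha.ne']

theorem flat_exponential_approximation_general (hε₀ : 0 < ε) (hε₁ : ε ≤ 1) (hκ : 1 ≤ κ)
    (hk : 0 < k) (hℓ : 100 * (κ + log (k / ε)) ≤ ℓ) {f : ℝ → ℝ} (hf : f = pkl k ℓ ∨ f = qkl k ℓ) :
    IsFlatExpApprox κ (5 / k) ε f := by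
  have hk₁ : (1 : ℝ) ≤ k := Nat.one_le_cast.2 hk
  have hlog₀ : 0 ≤ log k := log_nonneg hk₁
  have hlog : log k ≤ log (k / ε) :=
    log_le_log (by positivity) (le_div_self (by positivity) hε₀ hε₁)
  have hκℓ : κ ≤ k * ℓ / 4 := by linarith [le_mul_of_one_le_left ℓ.cast_nonneg hk₁]
  have herr : 2 * (k * exp (-ℓ)) * exp κ ≤ ε :=
    two_mul_mul_exp_neg_mul_exp_le (by positivity) hε₀ (by linarith)
  have hkℓ : 2 * (k * exp (-ℓ)) ≤ 1 :=
    (le_mul_of_one_le_right (by positivity) (one_le_exp (by linarith))).trans (herr.trans hε₁)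
  rcases hf with rfl | rfl
  · exact isFlatExpApprox_pkl hk hκℓ (by linarith [exp_pos (-(ℓ : ℝ))]) herr
  · exact isFlatExpApprox_qkl hk hκℓ hkℓ (by linarith) herr

end Flatness

end

/-- **Flat approximations to the exponential.**
Given `ε, η ∈ (0,1)` and `κ ≥ 1`, if `k ≥ 5/η` and `ℓ ≥ 100(κ + log(k/ε))`, then both
`p_{k,ℓ}` and `q_{k,ℓ}` are `(κ, η, ε)`-flat exponential approximations: they are
`ε`-close to `e^x` on `[-κ, κ]`, and everywhere bounded by `max(1, e^x) e^{η|x|}`. -/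
theorem flat_exponential_approximation
    (ε η κ : ℝ) (hε0 : 0 < ε) (hε1 : ε < 1) (hη0 : 0 < η) (hη1 : η < 1)
    (hκ : 1 ≤ κ) (k ℓ : ℕ) (hk : 0 < k) (hℓ : 0 < ℓ)
    (hk5 : 5 / η ≤ (k : ℝ))
    (hℓ100 : 100 * (κ + Real.log ((k : ℝ) / ε)) ≤ (ℓ : ℝ)) :
    ∀ f : ℝ → ℝ, (f = pkl k ℓ ∨ f = qkl k ℓ) →
      (∀ x ∈ Set.Icc (-κ) κ, |f x - Real.exp x| ≤ ε) ∧
      (∀ x : ℝ, |f x| ≤ max 1 (Real.exp x) * Real.exp (η * |x|)) := by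
  intro f hf
  have h := (flat_exponential_approximation_general hε0 hε1.le hκ hk hℓ100 hf).mono
    ((div_le_comm₀ hη0 (Nat.cast_pos.2 hk)).1 hk5)
  exact ⟨h.abs_sub_exp_le, h.abs_le_max_mul_exp⟩
end

section
/- For all positive integers k, ℓ, the bivariate real polynomial 0.5(x − y)(1 + 0.25(x − y)^2)(q_{k,ℓ}(x) − q_{k,ℓ}(y)) − 0.00025(x − y)^2 p_{k,ℓ}(x) is a (10^{2^k ℓ}, 2^k ℓ + 10, 200^{2^k ℓ})-bounded sum-of-squares polynomial in the variables x and y. -/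
open scoped BigOperators

/-- The total degree of a monomial (exponent vector). -/
def monomialDeg {σ : Type*} (m : σ →₀ ℕ) : ℕ := m.sum fun _ e => e

/-- A multivariate real polynomial is `(d, C)`-bounded if it has (total) degree at most
`d` and every coefficient of a monomial of degree `d' ≤ d` has magnitude at most `C/d'!`. -/
def MvBounded {σ : Type*} (d : ℕ) (C : ℝ) (f : MvPolynomial σ ℝ) : Prop :=
  f.totalDegree ≤ d ∧
  ∀ m : σ →₀ ℕ, monomialDeg m ≤ d →
    |MvPolynomial.coeff m f| ≤ C / (Nat.factorial (monomialDeg m) : ℝ)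

/-- A multivariate real polynomial is a `(k, d, C)`-bounded sum-of-squares polynomial if
it can be written as `q₁² + ⋯ + q_k²` with each `qᵢ` a `(d, C)`-bounded polynomial. -/
def MvSoSBounded {σ : Type*} (k d : ℕ) (C : ℝ) (f : MvPolynomial σ ℝ) : Prop :=
  ∃ g : Fin k → MvPolynomial σ ℝ, (∀ i, MvBounded d C (g i)) ∧ f = ∑ i, (g i) ^ 2

/-!
Write `h = y - x`. Integrating `p` along the segment from `x` to `y`, and integrating by parts to
write `p x` as such an integral too, turns the polynomial into a combination, with squares of
polynomials in `h` as coefficients, of integrals over `t ∈ [0, 1]` of `w t * Q (x + t h)`, where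
`w ≥ 0` and `Q = a p + c p'`. A Grönwall argument on each factor of `p` gives `-9 p ≤ p' ≤ p`, so
every `Q` is nonnegative on the line and hence a sum of two squares `a ^ 2`. Expanding
`a (x + t h)` in powers of `t` makes `∫ w t * a (x + t h) ^ 2` a positive semidefinite form, given
by a Gram matrix, in polynomials in `x` and `y`; factoring the matrix yields the squares.

Each square is at most the whole polynomial, which at the lattice points of `x, y ≥ 0`,
`x + y ≤ D` is controlled by `p ≤ exp`. Newton interpolation recovers the coefficients of a
polynomial of degree `D` from its values there, which bounds the coefficients of every summand.
-/

section SumOfTwoSquares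

open Polynomial

theorem X_sub_C_sq_dvd_of_nonneg_of_isRoot {P : ℝ[X]} (hP : ∀ x, 0 ≤ P.eval x) {u : ℝ}
    (hu : P.IsRoot u) : (X - C u) ^ 2 ∣ P := by
  rcases eq_or_ne P 0 with rfl | hP0
  · exact dvd_zero _
  have hmin : IsLocalMin (fun x => P.eval x) u :=
    Filter.Eventually.of_forall fun x => hu.eq_zero.trans_le (hP x)
  have hder : P.derivative.IsRoot u := hmin.hasDerivAt_eq_zero (P.hasDerivAt u)
  exact (le_rootMultiplicity_iff hP0).1 ((one_lt_rootMultiplicity_iff_isRoot hP0).2 ⟨hu, hder⟩)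

theorem exists_quadratic_dvd_of_nonneg {P : ℝ[X]} (hP : ∀ x, 0 ≤ P.eval x)
    (hdeg : P.degree ≠ 0) : ∃ u v : ℝ, (X - C u) ^ 2 + C v ^ 2 ∣ P := by
  obtain ⟨z, hz⟩ : ∃ z : ℂ, aeval z P = 0 := IsAlgClosed.exists_aeval_eq_zero ℂ P hdeg
  refine ⟨z.re, z.im, ?_⟩
  rcases eq_or_ne z.im 0 with him | him
  · have hroot : P.IsRoot z.re := by
      rw [← Complex.re_add_im z, him, Complex.ofReal_zero, zero_mul, add_zero,
        ← Complex.coe_algebraMap, aeval_algebraMap_apply, Complex.coe_algebraMap,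
        Complex.ofReal_eq_zero, coe_aeval_eq_eval] at hz
      exact hz
    simpa [him] using X_sub_C_sq_dvd_of_nonneg_of_isRoot hP hroot
  · have hsplit : (X - C z.re) ^ 2 + C z.im ^ 2 = X ^ 2 - C (2 * z.re) * X + C (‖z‖ ^ 2) := by
      rw [Complex.sq_norm, Complex.normSq_apply]
      simp only [C_add, C_mul, C_ofNat]
      ring
    exact hsplit ▸ P.quadratic_dvd_of_aeval_eq_zero_im_ne_zero hz him

theorem nonneg_of_quadratic_mul_nonneg {Q : ℝ[X]} {u v : ℝ}
    (hQ : ∀ x, 0 ≤ (((X - C u) ^ 2 + C v ^ 2) * Q).eval x) (x : ℝ) : 0 ≤ Q.eval x := by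
  have hoff : ({u}ᶜ : Set ℝ) ⊆ {x | 0 ≤ Q.eval x} := fun x hx => by
    have hpos : 0 < (x - u) ^ 2 + v ^ 2 := by
      have := sub_ne_zero.2 hx
      positivity
    refine nonneg_of_mul_nonneg_right ?_ hpos
    simpa using hQ x
  have hclosed : IsClosed {x | 0 ≤ Q.eval x} := isClosed_le continuous_const Q.continuous
  exact hclosed.closure_subset_iff.2 hoff ((dense_compl_singleton u).closure_eq ▸ Set.mem_univ x)

theorem exists_sq_add_sq_of_nonneg (m : ℕ) {P : ℝ[X]} (hdeg : P.natDegree ≤ 2 * m)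
    (hP : ∀ x, 0 ≤ P.eval x) :
    ∃ a b : ℝ[X], a.natDegree ≤ m ∧ b.natDegree ≤ m ∧ P = a ^ 2 + b ^ 2 := by
  induction m generalizing P with
  | zero =>
    rw [eq_C_of_natDegree_le_zero hdeg] at hP ⊢
    refine ⟨C √(P.coeff 0), 0, by simp, by simp, ?_⟩
    rw [← C_pow, Real.sq_sqrt (by simpa using hP 0), zero_pow two_ne_zero, add_zero]
  | succ m ih =>
    rcases eq_or_ne P.degree 0 with hconst | hconst
    · obtain ⟨a, b, ha, hb, hab⟩ := ih
        ((natDegree_eq_of_degree_eq_some hconst).trans_le (Nat.zero_le _)) hP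
      exact ⟨a, b, by omega, by omega, hab⟩
    obtain ⟨u, v, Q, rfl⟩ := exists_quadratic_dvd_of_nonneg hP hconst
    have hquad : ((X - C u) ^ 2 + C v ^ 2).natDegree = 2 := by compute_degree!
    have hQdeg : Q.natDegree ≤ 2 * m := by
      rcases eq_or_ne Q 0 with rfl | hQ0
      · exact Nat.zero_le _
      rw [natDegree_mul (ne_zero_of_natDegree_gt (hquad ▸ two_pos)) hQ0, hquad] at hdeg
      omega
    obtain ⟨a, b, ha, hb, rfl⟩ := ih hQdeg (nonneg_of_quadratic_mul_nonneg hP)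
    have hX : (X - C u).natDegree ≤ 1 := natDegree_X_sub_C_le u
    have hC : (C v).natDegree ≤ 0 := (natDegree_C v).le
    refine ⟨(X - C u) * a - C v * b, (X - C u) * b + C v * a, ?_, ?_, by ring⟩
    · exact (natDegree_sub_le_of_le (natDegree_mul_le_of_le hX ha)
        (natDegree_mul_le_of_le hC hb)).trans (by omega)
    · exact (natDegree_add_le_of_le (natDegree_mul_le_of_le hX hb)
        (natDegree_mul_le_of_le hC ha)).trans (by omega)

end SumOfTwoSquares

section Gram

theorem exists_sum_mulVec_sq_eq_norm_sq {ι E : Type*} [Fintype ι] [SeminormedAddCommGroup E]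
    [InnerProductSpace ℝ E] (v : ι → E) :
    ∃ B : Matrix ι ι ℝ, ∀ u : ι → ℝ, ‖∑ i, u i • v i‖ ^ 2 = ∑ i, (B.mulVec u i) ^ 2 := by
  classical
  obtain ⟨B, hB⟩ : ∃ B : Matrix ι ι ℝ, Matrix.gram ℝ v = B.conjTranspose * B := by
    open scoped MatrixOrder in
    exact CStarAlgebra.nonneg_iff_eq_star_mul_self.1 (Matrix.posSemidef_gram ℝ v).nonneg
  refine ⟨B, fun u => ?_⟩
  rw [← real_inner_self_eq_norm_sq, ← Matrix.star_dotProduct_gram_mulVec, hB,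
    ← Matrix.mulVec_mulVec, Matrix.dotProduct_mulVec, ← Matrix.star_mulVec]
  simp only [dotProduct, Pi.star_apply, star_trivial, sq]

theorem exists_sum_mulVec_sq_eq_integral_sq {ι α : Type*} [Fintype ι] [MeasurableSpace α]
    {μ : MeasureTheory.Measure α} {φ : ι → α → ℝ} (hφ : ∀ i, MeasureTheory.MemLp (φ i) 2 μ) :
    ∃ B : Matrix ι ι ℝ, ∀ u : ι → ℝ,
      ∫ t, (∑ i, u i * φ i t) ^ 2 ∂μ = ∑ i, (B.mulVec u i) ^ 2 := by
  obtain ⟨B, hB⟩ := exists_sum_mulVec_sq_eq_norm_sq fun i => (hφ i).toLp (φ i)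
  refine ⟨B, fun u => ?_⟩
  rw [← hB, ← real_inner_self_eq_norm_sq, MeasureTheory.L2.inner_def]
  refine MeasureTheory.integral_congr_ae ?_
  have hsmul : ∀ᵐ t ∂μ, ∀ i, (u i • (hφ i).toLp (φ i)) t = u i * φ i t :=
    MeasureTheory.ae_all_iff.2 fun i => by
      filter_upwards [MeasureTheory.Lp.coeFn_smul (u i) ((hφ i).toLp (φ i)), (hφ i).coeFn_toLp]
        with t hsmul htoLp
      rw [hsmul, Pi.smul_apply, htoLp, smul_eq_mul]
  filter_upwards [hsmul, MeasureTheory.Lp.coeFn_finsetSum Finset.univ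
    fun i => u i • (hφ i).toLp (φ i)] with t ht hsum
  rw [hsum, Finset.sum_apply, Finset.sum_congr rfl fun i _ => ht i, real_inner_self_eq_norm_sq,
    Real.norm_eq_abs, sq_abs]

end Gram

section PolySumSq

open MvPolynomial

variable {σ : Type*}

/-- A function on `ℝ^σ` is a sum of `n` squares of polynomial functions of degree at most `D`.
Unlike in `MvSoSBounded`, the coefficients are not controlled: bounds on them follow from values
of `f`. -/
def IsPolySumSq (n D : ℕ) (f : (σ → ℝ) → ℝ) : Prop :=
  ∃ g : Fin n → MvPolynomial σ ℝ,
    (∀ i, (g i).totalDegree ≤ D) ∧ ∀ v, f v = ∑ i, (eval v (g i)) ^ 2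

namespace IsPolySumSq

variable {m n D D' : ℕ} {f f' : (σ → ℝ) → ℝ}

theorem add (hf : IsPolySumSq m D f) (hf' : IsPolySumSq n D f') :
    IsPolySumSq (m + n) D fun v => f v + f' v := by
  obtain ⟨g, hg, hfg⟩ := hf
  obtain ⟨g', hg', hfg'⟩ := hf'
  refine ⟨Fin.append g g', fun i => ?_, fun v => ?_⟩
  · cases i using Fin.addCases with
    | left i => simpa only [Fin.append_left] using hg i
    | right i => simpa only [Fin.append_right] using hg' i
  · simp only [Fin.sum_univ_add, Fin.append_left, Fin.append_right, hfg, hfg']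

theorem mono (hf : IsPolySumSq m D f) (hmn : m ≤ n) (hD : D ≤ D') : IsPolySumSq n D' f := by
  obtain ⟨g, hg, hfg⟩ := hf
  have hf' : IsPolySumSq m D' f := ⟨g, fun i => (hg i).trans hD, hfg⟩
  have hzero : IsPolySumSq (n - m) D' fun _ : σ → ℝ => 0 := ⟨0, by simp, by simp⟩
  simpa only [add_zero, Nat.add_sub_cancel' hmn] using hf'.add hzero

theorem sq_mul (hf : IsPolySumSq n D f) (q : MvPolynomial σ ℝ) (hD : q.totalDegree + D ≤ D') :
    IsPolySumSq n D' fun v => (eval v q) ^ 2 * f v := by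
  obtain ⟨g, hg, hfg⟩ := hf
  refine ⟨fun i => q * g i, fun i => ?_, fun v => ?_⟩
  · exact (totalDegree_mul _ _).trans ((Nat.add_le_add_left (hg i) _).trans hD)
  · simp only [hfg, map_mul, mul_pow, Finset.mul_sum]

end IsPolySumSq

theorem totalDegree_toMvPolynomial_le {R : Type*} [CommSemiring R] [Nontrivial R] (i : σ)
    (p : Polynomial R) : (p.toMvPolynomial i).totalDegree ≤ p.natDegree := by
  rw [Polynomial.toMvPolynomial, Polynomial.aeval_eq_sum_range]
  refine totalDegree_finsetSum_le fun c hc => ?_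
  refine (totalDegree_smul_le _ _).trans ((totalDegree_X_pow i c).trans_le ?_)
  exact Nat.lt_succ_iff.1 (Finset.mem_range.1 hc)

theorem totalDegree_X_sub_X_le {R : Type*} [CommRing R] [Nontrivial R] (i j : σ) :
    (X i - X j : MvPolynomial σ R).totalDegree ≤ 1 :=
  (totalDegree_sub _ _).trans (by simp only [totalDegree_X, max_self, le_refl])

theorem exists_eval_segment_eq_sum {R : Type*} [CommRing R] [Nontrivial R] {m : ℕ}
    {a : Polynomial R} (ha : a.natDegree ≤ m) (i j : σ) :
    ∃ A : Fin (m + 1) → MvPolynomial σ R, (∀ c, (A c).totalDegree ≤ m) ∧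
      ∀ (v : σ → R) (t : R), a.eval (v i + t * (v j - v i)) = ∑ c, eval v (A c) * t ^ (c : ℕ) := by
  refine ⟨fun c => (Polynomial.hasseDeriv c a).toMvPolynomial i * (X j - X i) ^ (c : ℕ),
    fun c => ?_, fun v t => ?_⟩
  · have hderiv : ((Polynomial.hasseDeriv c a).toMvPolynomial i).totalDegree ≤ m - c :=
      (totalDegree_toMvPolynomial_le _ _).trans
        ((Polynomial.natDegree_hasseDeriv_le a c).trans (Nat.sub_le_sub_right ha _))
    have hpow : ((X j - X i : MvPolynomial σ R) ^ (c : ℕ)).totalDegree ≤ c :=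
      (totalDegree_pow _ _).trans (mul_le_of_le_one_right' (totalDegree_X_sub_X_le j i))
    exact (totalDegree_mul _ _).trans ((add_le_add hderiv hpow).trans (by omega))
  · have hdeg : (Polynomial.taylor (v i) a).natDegree < m + 1 := by
      rw [Polynomial.natDegree_taylor]
      omega
    rw [add_comm, ← Polynomial.taylor_eval, Polynomial.eval_eq_sum_range' hdeg,
      ← Fin.sum_univ_eq_sum_range fun c => (Polynomial.taylor (v i) a).coeff c * _ ^ c]
    refine Finset.sum_congr rfl fun c _ => ?_
    rw [Polynomial.taylor_coeff, map_mul, eval_toMvPolynomial, map_pow, map_sub, eval_X, eval_X,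
      mul_pow, mul_assoc, mul_comm (t ^ _)]

/-- The integral of a univariate polynomial along the segment from `x` to `y`, parametrized by
`[0, 1]`, against the weight `w`. For nonnegative `w` and `P` it is a sum of squares in `x`, `y`. -/
noncomputable def segmentIntegral (w : ℝ → ℝ) (P : Polynomial ℝ) (x y : ℝ) : ℝ :=
  ∫ t in (0 : ℝ)..1, w t * P.eval (x + t * (y - x))

theorem segmentIntegral_add {w : ℝ → ℝ} (hw : Continuous w) (P Q : Polynomial ℝ) (x y : ℝ) :
    segmentIntegral w (P + Q) x y = segmentIntegral w P x y + segmentIntegral w Q x y := by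
  simp only [segmentIntegral, Polynomial.eval_add, mul_add]
  exact intervalIntegral.integral_add (Continuous.intervalIntegrable (by fun_prop) _ _)
    (Continuous.intervalIntegrable (by fun_prop) _ _)

theorem isPolySumSq_segmentIntegral_sq {w : ℝ → ℝ} (hw : Continuous w)
    (hw0 : ∀ t ∈ Set.Ioc (0 : ℝ) 1, 0 ≤ w t) {m : ℕ} {a : Polynomial ℝ} (ha : a.natDegree ≤ m)
    (i j : σ) : IsPolySumSq (m + 1) m fun v => segmentIntegral w (a ^ 2) (v i) (v j) := by
  obtain ⟨A, hA, haA⟩ := exists_eval_segment_eq_sum ha i j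
  have hmem (c : Fin (m + 1)) : MeasureTheory.MemLp (fun t => √(w t) * t ^ (c : ℕ)) 2
      (MeasureTheory.volume.restrict (Set.Ioc (0 : ℝ) 1)) :=
    (MeasureTheory.memLp_two_iff_integrable_sq (by fun_prop)).2
      (Continuous.intervalIntegrable (by fun_prop) 0 1).1
  obtain ⟨B, hB⟩ := exists_sum_mulVec_sq_eq_integral_sq hmem
  refine ⟨fun r => ∑ c, C (B r c) * A c, fun r => ?_, fun v => ?_⟩
  · exact totalDegree_finsetSum_le fun c _ => (totalDegree_mul _ _).trans
      (by simpa only [totalDegree_C, zero_add] using hA c)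
  · simp only [map_sum, map_mul, eval_C]
    refine Eq.trans ?_ (hB fun c => eval v (A c))
    rw [segmentIntegral, intervalIntegral.integral_of_le zero_le_one]
    refine MeasureTheory.setIntegral_congr_fun measurableSet_Ioc fun t ht => ?_
    simp only [Polynomial.eval_pow, haA, mul_left_comm (eval v _), ← Finset.mul_sum, mul_pow,
      Real.sq_sqrt (hw0 t ht)]

theorem isPolySumSq_segmentIntegral {w : ℝ → ℝ} (hw : Continuous w)
    (hw0 : ∀ t ∈ Set.Ioc (0 : ℝ) 1, 0 ≤ w t) {m : ℕ} {P : Polynomial ℝ}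
    (hdeg : P.natDegree ≤ 2 * m) (hP : ∀ x, 0 ≤ P.eval x) (i j : σ) :
    IsPolySumSq (m + 1 + (m + 1)) m fun v => segmentIntegral w P (v i) (v j) := by
  obtain ⟨a, b, ha, hb, rfl⟩ := exists_sq_add_sq_of_nonneg m hdeg hP
  simpa only [segmentIntegral_add hw] using (isPolySumSq_segmentIntegral_sq hw hw0 ha i j).add
    (isPolySumSq_segmentIntegral_sq hw hw0 hb i j)

end PolySumSq

section MonotonicityGap

open Polynomial

variable {σ : Type*} {P : ℝ[X]}

theorem segmentIntegral_C_mul (w : ℝ → ℝ) (c : ℝ) (P : ℝ[X]) (x y : ℝ) :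
    segmentIntegral w (C c * P) x y = c * segmentIntegral w P x y := by
  simp only [segmentIntegral, eval_mul, eval_C, mul_left_comm _ c,
    intervalIntegral.integral_const_mul]

theorem segmentIntegral_one_sub_add_segmentIntegral_id (P : ℝ[X]) (x y : ℝ) :
    segmentIntegral (fun t => 1 - t) P x y + segmentIntegral id P x y =
      ∫ t in (0 : ℝ)..1, P.eval (x + t * (y - x)) := by
  rw [segmentIntegral, segmentIntegral,
    ← intervalIntegral.integral_add (Continuous.intervalIntegrable (by fun_prop) _ _)
      (Continuous.intervalIntegrable (by fun_prop) _ _)]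
  simp only [id, ← add_mul, sub_add_cancel, one_mul]

theorem integral_eval_eq_mul_segmentIntegral (P : ℝ[X]) (x y : ℝ) :
    ∫ z in y..x, P.eval z =
      (x - y) * (segmentIntegral (fun t => 1 - t) P x y + segmentIntegral id P x y) := by
  have hsubst := intervalIntegral.smul_integral_comp_mul_add (fun z => P.eval z) (y - x) x
    (a := 0) (b := 1)
  rw [mul_zero, zero_add, mul_one, sub_add_cancel, smul_eq_mul] at hsubst
  simp only [segmentIntegral_one_sub_add_segmentIntegral_id, add_comm x, mul_comm _ (y - x)]
  rw [intervalIntegral.integral_symm, ← hsubst, ← neg_mul, neg_sub]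

theorem eval_eq_segmentIntegral_sub (P : ℝ[X]) (x y : ℝ) :
    P.eval x = segmentIntegral (fun t => 1 - t) P x y + segmentIntegral id P x y -
      (y - x) * segmentIntegral (fun t => 1 - t) P.derivative x y := by
  have hderiv (t : ℝ) : HasDerivAt (fun t => (1 - t) * P.eval (x + t * (y - x)))
      ((y - x) * ((1 - t) * P.derivative.eval (x + t * (y - x))) - P.eval (x + t * (y - x))) t := by
    have hlin : HasDerivAt (fun t => x + t * (y - x)) (y - x) t := by
      simpa using ((hasDerivAt_id t).mul_const (y - x)).const_add x
    refine (((hasDerivAt_id' t).const_sub 1).mul ((P.hasDerivAt _).comp t hlin)).congr_deriv ?_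
    simp only [Function.comp_apply]
    ring
  have hftc := intervalIntegral.integral_eq_sub_of_hasDerivAt (fun t _ => hderiv t)
    (Continuous.intervalIntegrable (by fun_prop) 0 1)
  rw [intervalIntegral.integral_sub (Continuous.intervalIntegrable (by fun_prop) _ _)
    (Continuous.intervalIntegrable (by fun_prop) _ _), intervalIntegral.integral_const_mul,
    ← segmentIntegral_one_sub_add_segmentIntegral_id] at hftc
  simp only [sub_self, zero_mul, sub_zero, one_mul, add_zero, zero_sub] at hftc
  change _ = _ - (y - x) * ∫ t in (0 : ℝ)..1, (1 - t) * P.derivative.eval (x + t * (y - x))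
  linarith

/-- The polynomial of the theorem with `p` replaced by `P`; it is the slack in a strong monotonicity
inequality for an antiderivative of `P`. -/
noncomputable def monotonicityGap (P : ℝ[X]) (x y : ℝ) : ℝ :=
  0.5 * (x - y) * (1 + 0.25 * (x - y) ^ 2) * (∫ z in y..x, P.eval z) -
    0.00025 * (x - y) ^ 2 * P.eval x

/- With `h = y - x`, integrating by parts to express `P.eval x` leaves the term
`0.00025 * h ^ 3 * segmentIntegral (1 - t) P.derivative`, which has no sign. It is split by
`4 * h ^ 3 = h ^ 2 * ((1 + h) ^ 2 - (1 - h) ^ 2)` and each half is absorbed by a share of `P`. -/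
theorem monotonicityGap_eq_sum_sq_mul_segmentIntegral (P : ℝ[X]) (x y : ℝ) :
    monotonicityGap P x y =
      ((y - x) * (1 + (y - x))) ^ 2 *
          segmentIntegral (fun t => 1 - t) (C 0.0625 * P + C 0.0000625 * P.derivative) x y +
        ((y - x) * (1 - (y - x))) ^ 2 *
          segmentIntegral (fun t => 1 - t) (C 0.0625 * P + C (-0.0000625) * P.derivative) x y +
        (y - x) ^ 2 * segmentIntegral (fun t => 1 - t) (C 0.37475 * P) x y +
        (y - x) ^ 2 * segmentIntegral id (C 0.49975 * P) x y +
        ((y - x) * (y - x)) ^ 2 * segmentIntegral id (C 0.125 * P) x y := by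
  have hw : Continuous fun t : ℝ => 1 - t := by fun_prop
  simp only [monotonicityGap, integral_eval_eq_mul_segmentIntegral, segmentIntegral_add hw,
    segmentIntegral_C_mul, eval_eq_segmentIntegral_sub P x y]
  ring

theorem natDegree_C_mul_add_C_mul_derivative_le {R : Type*} [Semiring R] {P : R[X]} {n : ℕ}
    (hP : P.natDegree ≤ n) (a c : R) : (C a * P + C c * P.derivative).natDegree ≤ n :=
  natDegree_add_le_of_degree_le ((natDegree_C_mul_le a P).trans hP)
    ((natDegree_C_mul_le c _).trans ((natDegree_derivative_le P).trans (by omega)))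

theorem eval_C_mul_add_C_mul_derivative_nonneg {a c L x : ℝ} (hP0 : 0 ≤ P.eval x)
    (hP : |P.derivative.eval x| ≤ L * P.eval x) (hc : |c| * L ≤ a) :
    0 ≤ (C a * P + C c * P.derivative).eval x := by
  have hder : |c * P.derivative.eval x| ≤ a * P.eval x := by
    calc |c * P.derivative.eval x| = |c| * |P.derivative.eval x| := abs_mul _ _
      _ ≤ |c| * (L * P.eval x) := mul_le_mul_of_nonneg_left hP (abs_nonneg c)
      _ ≤ a * P.eval x := by
        rw [← mul_assoc]
        exact mul_le_mul_of_nonneg_right hc hP0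
  rw [eval_add, eval_C_mul, eval_C_mul]
  linarith [neg_abs_le (c * P.derivative.eval x)]

theorem isPolySumSq_monotonicityGap {m : ℕ} (hdeg : P.natDegree ≤ 2 * m)
    (hP : ∀ x, |P.derivative.eval x| ≤ 1000 * P.eval x) (i j : σ) :
    IsPolySumSq (10 * (m + 1)) (m + 2) fun v => monotonicityGap P (v i) (v j) := by
  have hP0 (x : ℝ) : 0 ≤ P.eval x := by linarith [abs_nonneg (P.derivative.eval x), hP x]
  have hw : Continuous fun t : ℝ => 1 - t := by fun_prop
  have hw0 (t : ℝ) (ht : t ∈ Set.Ioc (0 : ℝ) 1) : 0 ≤ 1 - t := sub_nonneg.2 ht.2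
  have hid0 (t : ℝ) (ht : t ∈ Set.Ioc (0 : ℝ) 1) : 0 ≤ t := ht.1.le
  have hmixed {c : ℝ} (hc : |c| * 1000 ≤ 0.0625) :=
    isPolySumSq_segmentIntegral hw hw0 (natDegree_C_mul_add_C_mul_derivative_le hdeg 0.0625 c)
      (fun x => eval_C_mul_add_C_mul_derivative_nonneg (hP0 x) (hP x) hc) i j
  have hpure {w : ℝ → ℝ} (hw : Continuous w) (hw0 : ∀ t ∈ Set.Ioc (0 : ℝ) 1, 0 ≤ w t) {a : ℝ}
      (ha : 0 ≤ a) :=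
    isPolySumSq_segmentIntegral hw hw0 ((natDegree_C_mul_le a P).trans hdeg)
      (fun x => (eval_C_mul (R := ℝ)).symm ▸ mul_nonneg ha (hP0 x)) i j
  let H : MvPolynomial σ ℝ := .X j - .X i
  have hH : H.totalDegree ≤ 1 := totalDegree_X_sub_X_le j i
  have hadd : (1 + H).totalDegree ≤ 1 :=
    (MvPolynomial.totalDegree_add _ _).trans (by simpa [MvPolynomial.totalDegree_one] using hH)
  have hsub : (1 - H).totalDegree ≤ 1 :=
    (MvPolynomial.totalDegree_sub _ _).trans (by simpa [MvPolynomial.totalDegree_one] using hH)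
  have hmul {A B : MvPolynomial σ ℝ} (hA : A.totalDegree ≤ 1) (hB : B.totalDegree ≤ 1) :
      (A * B).totalDegree + m ≤ m + 2 := by
    have := MvPolynomial.totalDegree_mul A B
    omega
  have hplus := (hmixed (c := 0.0000625) (by norm_num [abs_of_pos])).sq_mul _ (hmul hH hadd)
  have hminus := (hmixed (c := -0.0000625) (by norm_num [abs_of_pos])).sq_mul _ (hmul hH hsub)
  have hleft := (hpure hw hw0 (a := 0.37475) (by norm_num)).sq_mul (D' := m + 2) H (by omega)
  have hright :=
    (hpure continuous_id hid0 (a := 0.49975) (by norm_num)).sq_mul (D' := m + 2) H (by omega)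
  have hquartic := (hpure continuous_id hid0 (a := 0.125) (by norm_num)).sq_mul _ (hmul hH hH)
  have hsum := (((hplus.add hminus).add hleft).add hright).add hquartic
  convert hsum.mono (n := 10 * (m + 1)) (by omega) le_rfl using 2 with v
  simp only [monotonicityGap_eq_sum_sq_mul_segmentIntegral, H, map_mul, map_add, map_sub, map_one,
    MvPolynomial.eval_X]

theorem monotonicityGap_le {D x y : ℝ} (hP0 : ∀ z, 0 ≤ z → 0 ≤ P.eval z)
    (hPexp : ∀ z, 0 ≤ z → P.eval z ≤ Real.exp z) (hx : x ∈ Set.Icc 0 D) (hy : y ∈ Set.Icc 0 D) :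
    monotonicityGap P x y ≤ 0.5 * D * (1 + 0.25 * D ^ 2) * Real.exp D := by
  have hint : |∫ z in y..x, P.eval z| ≤ Real.exp D := by
    have hle : |∫ z in y..x, P.eval z| ≤ |∫ z in y..x, Real.exp z| :=
      intervalIntegral.norm_integral_le_abs_of_norm_le (f := fun z => P.eval z)
        (MeasureTheory.ae_restrict_of_forall_mem measurableSet_uIoc fun z hz => by
          have hz0 : 0 ≤ z := (le_min hy.1 hx.1).trans (Set.uIoc_subset_uIcc hz).1
          rw [Real.norm_of_nonneg (hP0 z hz0)]
          exact hPexp z hz0) intervalIntegral.intervalIntegrable_exp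
    rw [integral_exp] at hle
    exact hle.trans (abs_sub_le_of_nonneg_of_le (Real.exp_nonneg x) (Real.exp_le_exp.2 hx.2)
      (Real.exp_nonneg y) (Real.exp_le_exp.2 hy.2))
  have hxy : |x - y| ≤ D := abs_sub_le_of_nonneg_of_le hx.1 hx.2 hy.1 hy.2
  have hx0 : 0 ≤ P.eval x := hP0 x hx.1
  calc monotonicityGap P x y
      ≤ 0.5 * (x - y) * (1 + 0.25 * (x - y) ^ 2) * ∫ z in y..x, P.eval z := by
        rw [monotonicityGap]
        exact sub_le_self _ (by positivity)
    _ ≤ 0.5 * |x - y| * (1 + 0.25 * |x - y| ^ 2) * |∫ z in y..x, P.eval z| := by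
        refine (le_abs_self _).trans_eq ?_
        rw [abs_mul, abs_mul, abs_mul, abs_of_pos (by norm_num : (0 : ℝ) < 0.5), sq_abs,
          abs_of_pos (by positivity : 0 < 1 + 0.25 * (x - y) ^ 2)]
    _ ≤ 0.5 * D * (1 + 0.25 * D ^ 2) * Real.exp D := by
        have hD : 0 ≤ D := hx.1.trans hx.2
        gcongr

end MonotonicityGap

section Growth

open Polynomial

theorem exp_sub_mul_eval_le_of_derivative_le {P : ℝ[X]} {b : ℝ}
    (hP : ∀ x ≤ b, P.derivative.eval x ≤ P.eval x) {x : ℝ} (hx : x ≤ b) :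
    Real.exp (x - b) * P.eval b ≤ P.eval x := by
  have hderiv (z : ℝ) : HasDerivAt (fun z => Real.exp (-z) * P.eval z)
      (Real.exp (-z) * (P.derivative.eval z - P.eval z)) z :=
    ((hasDerivAt_neg z).exp.mul (P.hasDerivAt z)).congr_deriv (by ring)
  have hanti : AntitoneOn (fun z => Real.exp (-z) * P.eval z) (Set.Iic b) :=
    antitoneOn_of_hasDerivWithinAt_nonpos (convex_Iic b)
      (fun z _ => (hderiv z).continuousAt.continuousWithinAt)
      (fun z _ => (hderiv z).hasDerivWithinAt) fun z hz =>
        mul_nonpos_of_nonneg_of_nonpos (Real.exp_nonneg _)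
          (sub_nonpos.2 (hP z (Set.mem_Iic.1 (interior_subset hz))))
  calc Real.exp (x - b) * P.eval b
      = Real.exp x * (Real.exp (-b) * P.eval b) := by
        rw [sub_eq_add_neg, Real.exp_add, mul_assoc]
    _ ≤ Real.exp x * (Real.exp (-x) * P.eval x) :=
        mul_le_mul_of_nonneg_left (hanti hx Set.self_mem_Iic hx) (Real.exp_nonneg x)
    _ = P.eval x := by rw [← mul_assoc, ← Real.exp_add, add_neg_cancel, Real.exp_zero, one_mul]

theorem eval_derivative_prod_mem_Icc {ι : Type*} {s : Finset ι} {P : ι → ℝ[X]} {a b : ι → ℝ}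
    {x : ℝ} (hP0 : ∀ i ∈ s, 0 ≤ (P i).eval x)
    (hP : ∀ i ∈ s,
      (P i).derivative.eval x ∈ Set.Icc (a i * (P i).eval x) (b i * (P i).eval x)) :
    (∏ i ∈ s, P i).derivative.eval x ∈
      Set.Icc ((∑ i ∈ s, a i) * (∏ i ∈ s, P i).eval x)
        ((∑ i ∈ s, b i) * (∏ i ∈ s, P i).eval x) := by
  classical
  have herase (i : ι) : 0 ≤ (∏ j ∈ s.erase i, P j).eval x := by
    rw [eval_prod]
    exact Finset.prod_nonneg fun j hj => hP0 j (Finset.mem_of_mem_erase hj)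
  have hsplit (c : ι → ℝ) : (∑ i ∈ s, c i) * (∏ i ∈ s, P i).eval x =
      ∑ i ∈ s, (∏ j ∈ s.erase i, P j).eval x * (c i * (P i).eval x) := by
    rw [Finset.sum_mul]
    refine Finset.sum_congr rfl fun i hi => ?_
    rw [← Finset.mul_prod_erase s P hi, eval_mul]
    ring
  simp only [hsplit, derivative_prod_finset, eval_finsetSum, eval_mul]
  exact ⟨Finset.sum_le_sum fun i hi => mul_le_mul_of_nonneg_left (hP i hi).1 (herase i),
    Finset.sum_le_sum fun i hi => mul_le_mul_of_nonneg_left (hP i hi).2 (herase i)⟩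

end Growth

section ExpTrunc

open Polynomial

/-- The polynomial `∑_{k ≤ n} X^k / k!` behind the function `taylorExp n`. -/
noncomputable def expTrunc (n : ℕ) : ℝ[X] :=
  PowerSeries.trunc (n + 1) (PowerSeries.exp ℝ)

theorem eval_expTrunc (n : ℕ) (x : ℝ) : (expTrunc n).eval x = taylorExp n x := by
  rw [expTrunc, ← eval₂_id, PowerSeries.eval₂_trunc_eq_sum_range, taylorExp]
  refine Finset.sum_congr rfl fun i _ => ?_
  simp only [PowerSeries.coeff_exp, map_div₀, map_one, map_natCast, one_div_mul_eq_div]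

theorem eval_expTrunc_zero (n : ℕ) : (expTrunc n).eval 0 = 1 := by
  rw [← coeff_zero_eq_eval_zero, expTrunc, PowerSeries.coeff_trunc, if_pos n.succ_pos,
    PowerSeries.coeff_exp]
  simp

theorem natDegree_expTrunc_le (n : ℕ) : (expTrunc n).natDegree ≤ n :=
  Nat.lt_succ_iff.1 (PowerSeries.natDegree_trunc_lt _ n)

theorem derivative_expTrunc (n : ℕ) :
    (expTrunc n).derivative = expTrunc n - C (n.factorial : ℝ)⁻¹ * X ^ n := by
  rw [expTrunc, ← PowerSeries.trunc_derivative, PowerSeries.derivative_exp,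
    PowerSeries.trunc_succ, PowerSeries.coeff_exp, ← C_mul_X_pow_eq_monomial]
  simp

variable {n : ℕ}

theorem eval_derivative_expTrunc_le (hn : Even n) (x : ℝ) :
    (expTrunc n).derivative.eval x ≤ (expTrunc n).eval x := by
  rw [derivative_expTrunc]
  simp only [eval_sub, eval_mul, eval_C, eval_pow, eval_X]
  have := hn.pow_nonneg x
  exact sub_le_self _ (by positivity)

theorem exp_le_eval_expTrunc_of_nonpos (hn : Even n) {x : ℝ} (hx : x ≤ 0) :
    Real.exp x ≤ (expTrunc n).eval x := by
  simpa only [sub_zero, eval_expTrunc_zero, mul_one] using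
    exp_sub_mul_eval_le_of_derivative_le (fun z _ => eval_derivative_expTrunc_le hn z) hx

theorem div_nine_pow_div_factorial_le_exp_neg (n : ℕ) :
    ((n : ℝ) / 9) ^ n / n.factorial ≤ Real.exp (-n) := by
  have hexp : Real.exp n * Real.exp n ≤ 9 ^ n := by
    rw [← Real.exp_one_pow, ← mul_pow]
    gcongr
    nlinarith [Real.exp_one_lt_three, Real.exp_pos 1]
  calc ((n : ℝ) / 9) ^ n / n.factorial
      = (n : ℝ) ^ n / n.factorial / 9 ^ n := by rw [div_pow, div_right_comm]
    _ ≤ Real.exp n / 9 ^ n := by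
        gcongr
        exact Real.pow_div_factorial_le_exp _ n.cast_nonneg n
    _ ≤ Real.exp (-n) := by
        rwa [Real.exp_neg, div_le_iff₀ (by positivity), inv_mul_eq_div,
          le_div_iff₀ (Real.exp_pos _)]

theorem pow_div_factorial_le_eval_expTrunc_of_neg_div_nine_le (hn : Even n) {x : ℝ}
    (hx : -(n / 9 : ℝ) ≤ x) : x ^ n / n.factorial ≤ (expTrunc n).eval x := by
  rcases le_total 0 x with hx0 | hx0
  · rw [eval_expTrunc]
    exact Finset.single_le_sum (f := fun i => x ^ i / (i.factorial : ℝ))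
      (fun i _ => by positivity) (Finset.self_mem_range_succ n)
  · calc x ^ n / n.factorial = (-x) ^ n / n.factorial := by rw [hn.neg_pow]
      _ ≤ ((n : ℝ) / 9) ^ n / n.factorial := by
          gcongr
          · exact neg_nonneg.2 hx0
          · exact neg_le.1 hx
      _ ≤ Real.exp (-n) := div_nine_pow_div_factorial_le_exp_neg n
      _ ≤ Real.exp x := by
          refine Real.exp_le_exp.2 (le_trans (neg_le_neg ?_) hx)
          exact div_le_self n.cast_nonneg (by norm_num)
      _ ≤ (expTrunc n).eval x := exp_le_eval_expTrunc_of_nonpos hn hx0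

theorem eval_derivative_expTrunc_sub_monomial_le (hn : Even n) {x : ℝ} (hx : x ≤ -(n / 9 : ℝ)) :
    (expTrunc n - C (10 * n.factorial : ℝ)⁻¹ * X ^ n).derivative.eval x ≤
      (expTrunc n - C (10 * n.factorial : ℝ)⁻¹ * X ^ n).eval x := by
  have hdiff : (expTrunc n - C (10 * n.factorial : ℝ)⁻¹ * X ^ n).eval x -
      (expTrunc n - C (10 * n.factorial : ℝ)⁻¹ * X ^ n).derivative.eval x =
        (9 * x ^ n + n * x ^ (n - 1)) / (10 * n.factorial) := by
    simp only [derivative_sub, derivative_expTrunc, derivative_C_mul, derivative_X_pow, eval_sub,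
      eval_mul, eval_C, eval_pow, eval_X]
    field_simp
    ring
  have hnum : 0 ≤ 9 * x ^ n + n * x ^ (n - 1) := by
    rcases n.eq_zero_or_pos with rfl | hpos
    · norm_num
    have hx0 : x ≤ 0 := hx.trans (neg_nonpos.2 (by positivity))
    have hpow : x ^ (n - 1) ≤ 0 := (Nat.Even.sub_odd hpos hn odd_one).pow_nonpos hx0
    calc 0 ≤ x ^ (n - 1) * (9 * x + n) := mul_nonneg_of_nonpos_of_nonpos hpow (by linarith)
      _ = 9 * x ^ n + n * x ^ (n - 1) := by
        rw [← pow_sub_one_mul hpos.ne' x]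
        ring
  exact sub_nonneg.1 (hdiff ▸ by positivity)

/- To the right of `-n / 9` the monomial is at most `exp (-n)`; to the left, the difference of the
two sides satisfies `D' ≤ D`, so its sign at `-n / 9` propagates. -/
theorem pow_div_ten_mul_factorial_le_eval_expTrunc (hn : Even n) (x : ℝ) :
    x ^ n / (10 * n.factorial) ≤ (expTrunc n).eval x := by
  have hright {z : ℝ} (hz : -(n / 9 : ℝ) ≤ z) :
      z ^ n / (10 * n.factorial) ≤ (expTrunc n).eval z := by
    refine le_trans ?_ (pow_div_factorial_le_eval_expTrunc_of_neg_div_nine_le hn hz)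
    have := hn.pow_nonneg z
    gcongr
    exact le_mul_of_one_le_left (by positivity) (by norm_num)
  rcases le_total (-(n / 9 : ℝ)) x with hx | hx
  · exact hright hx
  have heval (z : ℝ) : (expTrunc n - C (10 * n.factorial : ℝ)⁻¹ * X ^ n).eval z =
      (expTrunc n).eval z - z ^ n / (10 * n.factorial) := by
    simp only [eval_sub, eval_mul, eval_C, eval_pow, eval_X, inv_mul_eq_div]
  have hgrowth := exp_sub_mul_eval_le_of_derivative_le
    (fun z hz => eval_derivative_expTrunc_sub_monomial_le hn hz) hx
  rw [heval, heval] at hgrowth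
  exact sub_nonneg.1
    ((mul_nonneg (Real.exp_nonneg _) (sub_nonneg.2 (hright le_rfl))).trans hgrowth)

theorem neg_nine_mul_eval_expTrunc_le (hn : Even n) (x : ℝ) :
    -9 * (expTrunc n).eval x ≤ (expTrunc n).derivative.eval x := by
  have hpow := pow_div_ten_mul_factorial_le_eval_expTrunc hn x
  rw [derivative_expTrunc, eval_sub, eval_mul, eval_C, eval_pow, eval_X]
  rw [mul_comm, ← div_div, div_le_iff₀ (by norm_num), div_eq_inv_mul] at hpow
  linarith

theorem eval_expTrunc_nonneg (hn : Even n) (x : ℝ) :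
    0 ≤ (expTrunc n).eval x := by
  have := hn.pow_nonneg x
  exact le_trans (by positivity) (pow_div_ten_mul_factorial_le_eval_expTrunc hn x)

end ExpTrunc

section TruncatedProduct

open Polynomial

/-- The polynomial `p_{k,l}` behind the function `pkl k l`. -/
noncomputable def pklPoly (k l : ℕ) : ℝ[X] :=
  ∏ j ∈ Finset.Icc 1 k, (expTrunc (2 ^ j * l)).comp (C (k : ℝ)⁻¹ * X)

theorem eval_pklPoly (k l : ℕ) (x : ℝ) : (pklPoly k l).eval x = pkl k l x := by
  simp only [pklPoly, pkl, eval_prod, eval_comp, eval_mul, eval_C, eval_X, eval_expTrunc,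
    inv_mul_eq_div]

theorem even_two_pow_mul {j : ℕ} (hj : 1 ≤ j) (l : ℕ) : Even (2 ^ j * l) :=
  (even_two.pow_of_ne_zero (Nat.one_le_iff_ne_zero.1 hj)).mul_right l

theorem eval_pklPoly_nonneg (k l : ℕ) (x : ℝ) : 0 ≤ (pklPoly k l).eval x := by
  rw [pklPoly, eval_prod]
  refine Finset.prod_nonneg fun j hj => ?_
  rw [eval_comp]
  exact eval_expTrunc_nonneg (even_two_pow_mul (Finset.mem_Icc.1 hj).1 l) _

theorem eval_derivative_pklPoly_mem_Icc (k l : ℕ) (x : ℝ) :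
    (pklPoly k l).derivative.eval x ∈
      Set.Icc (-9 * (pklPoly k l).eval x) ((pklPoly k l).eval x) := by
  have hP := eval_pklPoly_nonneg k l x
  have hsum : (∑ _j ∈ Finset.Icc 1 k, (k : ℝ)⁻¹) ≤ 1 := by
    simpa [← div_eq_mul_inv] using div_self_le_one (k : ℝ)
  have hfactor : ∀ j ∈ Finset.Icc 1 k,
      ((expTrunc (2 ^ j * l)).comp (C (k : ℝ)⁻¹ * X)).derivative.eval x ∈
        Set.Icc (-9 * (k : ℝ)⁻¹ * ((expTrunc (2 ^ j * l)).comp (C (k : ℝ)⁻¹ * X)).eval x)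
          ((k : ℝ)⁻¹ * ((expTrunc (2 ^ j * l)).comp (C (k : ℝ)⁻¹ * X)).eval x) := fun j hj => by
    have heven := even_two_pow_mul (Finset.mem_Icc.1 hj).1 l
    simp only [derivative_comp, derivative_C_mul, derivative_X, mul_one, eval_mul, eval_comp,
      eval_C, eval_X, mul_comm (-9) (k : ℝ)⁻¹, mul_assoc]
    have hk : 0 ≤ (k : ℝ)⁻¹ := by positivity
    exact ⟨mul_le_mul_of_nonneg_left (neg_nine_mul_eval_expTrunc_le heven _) hk,
      mul_le_mul_of_nonneg_left (eval_derivative_expTrunc_le heven _) hk⟩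
  have hfactor0 : ∀ j ∈ Finset.Icc 1 k,
      0 ≤ ((expTrunc (2 ^ j * l)).comp (C (k : ℝ)⁻¹ * X)).eval x := fun j hj => by
    rw [eval_comp]
    exact eval_expTrunc_nonneg (even_two_pow_mul (Finset.mem_Icc.1 hj).1 l) _
  have hprod := eval_derivative_prod_mem_Icc hfactor0 hfactor
  rw [← Finset.mul_sum] at hprod
  rw [pklPoly] at hP ⊢
  exact ⟨hprod.1.trans' (by nlinarith), hprod.2.trans (mul_le_of_le_one_left hP hsum)⟩

theorem abs_eval_derivative_pklPoly_le (k l : ℕ) (x : ℝ) :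
    |(pklPoly k l).derivative.eval x| ≤ 9 * (pklPoly k l).eval x := by
  obtain ⟨hlower, hupper⟩ := eval_derivative_pklPoly_mem_Icc k l x
  exact abs_le.2 ⟨by linarith, by linarith [eval_pklPoly_nonneg k l x]⟩

theorem eval_pklPoly_le_exp (k l : ℕ) {x : ℝ} (hx : 0 ≤ x) :
    (pklPoly k l).eval x ≤ Real.exp x := by
  have hzero : (pklPoly k l).eval 0 = 1 := by
    simp only [pklPoly, eval_prod, eval_comp, eval_mul, eval_C, eval_X, mul_zero,
      eval_expTrunc_zero, Finset.prod_const_one]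
  have hgrowth := exp_sub_mul_eval_le_of_derivative_le
    (fun z _ => (eval_derivative_pklPoly_mem_Icc k l z).2) hx
  rwa [hzero, zero_sub, Real.exp_neg, inv_mul_le_iff₀ (Real.exp_pos x), mul_one] at hgrowth

theorem natDegree_pklPoly_le (k l : ℕ) : (pklPoly k l).natDegree ≤ 2 * ((2 ^ k - 1) * l) := by
  have hfactor (j : ℕ) :
      ((expTrunc (2 ^ j * l)).comp (C (k : ℝ)⁻¹ * X)).natDegree ≤ 2 ^ j * l := by
    rw [natDegree_comp]
    calc _ ≤ 2 ^ j * l * 1 :=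
          Nat.mul_le_mul (natDegree_expTrunc_le _) ((natDegree_C_mul_le _ _).trans natDegree_X_le)
      _ = 2 ^ j * l := mul_one _
  have hgeom : ∑ j ∈ Finset.Icc 1 k, 2 ^ j = 2 * (2 ^ k - 1) := by
    rw [← Finset.Ico_succ_right_eq_Icc, Finset.sum_Ico_eq_sum_range]
    simp [pow_add, ← Finset.mul_sum, Nat.geomSum_eq]
  calc (pklPoly k l).natDegree
      ≤ ∑ j ∈ Finset.Icc 1 k, 2 ^ j * l :=
        (natDegree_prod_le _ _).trans (Finset.sum_le_sum fun j _ => hfactor j)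
    _ = 2 * ((2 ^ k - 1) * l) := by rw [← Finset.sum_mul, hgeom, mul_assoc]

theorem qkl_sub_qkl (k l : ℕ) (x y : ℝ) :
    qkl k l x - qkl k l y = ∫ z in y..x, (pklPoly k l).eval z := by
  have hint (b : ℝ) : IntervalIntegrable (pkl k l) MeasureTheory.volume 0 b := by
    simp only [← funext (eval_pklPoly k l)]
    exact (pklPoly k l).continuous.intervalIntegrable 0 b
  simp only [qkl, add_sub_add_left_eq_sub, eval_pklPoly]
  exact intervalIntegral.integral_interval_sub_left (hint x) (hint y)

theorem monotonicityGap_pklPoly (k l : ℕ) (x y : ℝ) :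
    monotonicityGap (pklPoly k l) x y =
      0.5 * (x - y) * (1 + 0.25 * (x - y) ^ 2) * (qkl k l x - qkl k l y) -
        0.00025 * (x - y) ^ 2 * pkl k l x := by
  rw [monotonicityGap, qkl_sub_qkl, eval_pklPoly]

theorem isPolySumSq_monotonicityGap_pklPoly {σ : Type*} (k : ℕ) {l : ℕ} (hl : 0 < l) (i j : σ) :
    IsPolySumSq (10 ^ (2 ^ k * l)) (2 ^ k * l + 1) fun v =>
      monotonicityGap (pklPoly k l) (v i) (v j) := by
  have hderiv (x : ℝ) : |(pklPoly k l).derivative.eval x| ≤ 1000 * (pklPoly k l).eval x :=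
    (abs_eval_derivative_pklPoly_le k l x).trans (by linarith [eval_pklPoly_nonneg k l x])
  have hm : (2 ^ k - 1) * l + 1 ≤ 2 ^ k * l := by
    rw [Nat.sub_mul, one_mul]
    have := Nat.le_mul_of_pos_left l (Nat.two_pow_pos k)
    omega
  have hcount : 10 * ((2 ^ k - 1) * l + 1) ≤ 10 ^ (2 ^ k * l) :=
    (Nat.mul_le_mul_left 10 hm).trans (Nat.mul_le_pow (by norm_num) _)
  exact (isPolySumSq_monotonicityGap (natDegree_pklPoly_le k l) hderiv i j).mono hcount (by omega)

theorem monotonicityGap_pklPoly_natCast_le (k l : ℕ) {D : ℕ} {a : Fin 2 → ℕ}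
    (ha : ∑ s, a s ≤ D) :
    monotonicityGap (pklPoly k l) (a 0) (a 1) ≤
      0.5 * (D : ℝ) * (1 + 0.25 * (D : ℝ) ^ 2) * Real.exp D := by
  have hmem (s : Fin 2) : (a s : ℝ) ∈ Set.Icc 0 (D : ℝ) :=
    ⟨Nat.cast_nonneg _, Nat.cast_le.2
      ((Finset.single_le_sum (fun _ _ => Nat.zero_le _) (Finset.mem_univ s)).trans ha)⟩
  exact monotonicityGap_le (fun z _ => eval_pklPoly_nonneg k l z)
    (fun z hz => eval_pklPoly_le_exp k l hz) (hmem 0) (hmem 1)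

end TruncatedProduct

section NewtonInterpolation

open MvPolynomial

theorem eq_sum_fwdDiff_mul_descPochhammer {K : Type*} [Field K] [CharZero K] {P : Polynomial K}
    {n : ℕ} (hP : P.natDegree ≤ n) :
    P = ∑ i ∈ Finset.range (n + 1),
      Polynomial.C ((fwdDiff 1)^[i] (fun z => P.eval z) 0 / i.factorial) * descPochhammer K i := by
  refine Polynomial.eq_of_infinite_eval_eq _ _
    ((Set.infinite_range_of_injective Nat.cast_injective).mono ?_)
  rintro _ ⟨a, rfl⟩
  have hvanish (i : ℕ) (hi : n < i) : (fwdDiff 1)^[i] (fun z => P.eval z) 0 = 0 :=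
    congrFun (Polynomial.fwdDiff_iter_eq_zero_of_degree_lt (hP.trans_lt hi)) 0
  have hnewton := shift_eq_sum_fwdDiff_iter 1 (fun z => P.eval z) a 0
  simp only [zero_add, nsmul_eq_mul, mul_one] at hnewton
  calc P.eval (a : K)
      = ∑ i ∈ Finset.range (a + 1), a.choose i * (fwdDiff 1)^[i] (fun z => P.eval z) 0 := hnewton
    _ = ∑ i ∈ Finset.range (a + n + 1), a.choose i * (fwdDiff 1)^[i] (fun z => P.eval z) 0 := by
        refine Finset.sum_subset (Finset.range_mono (by omega)) fun i _ hi => ?_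
        rw [Nat.choose_eq_zero_of_lt (by simpa using hi), Nat.cast_zero, zero_mul]
    _ = ∑ i ∈ Finset.range (n + 1), a.choose i * (fwdDiff 1)^[i] (fun z => P.eval z) 0 := by
        refine (Finset.sum_subset (Finset.range_mono (by omega)) fun i _ hi => ?_).symm
        rw [hvanish i (by simpa using hi), mul_zero]
    _ = _ := by
        rw [Polynomial.eval_finsetSum]
        refine Finset.sum_congr rfl fun i _ => ?_
        rw [Polynomial.eval_mul, Polynomial.eval_C, Nat.cast_choose_eq_descPochhammer_div K]
        ring

theorem factorial_mul_abs_coeff_descPochhammer_le (i j : ℕ) :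
    j.factorial * |(descPochhammer ℝ i).coeff j| ≤ 2 ^ i * i.factorial := by
  induction i generalizing j with
  | zero =>
    rw [descPochhammer_zero, Polynomial.coeff_one]
    split_ifs with hj <;> simp [hj]
  | succ i ih =>
    have hshift : j.factorial * |(descPochhammer ℝ i * Polynomial.X).coeff j| ≤
        (i + 1 : ℝ) * (2 ^ i * i.factorial) := by
      rcases j with - | j
      · rw [Polynomial.coeff_mul_X_zero, abs_zero, mul_zero]
        positivity
      rw [Polynomial.coeff_mul_X]
      rcases le_or_gt j i with hji | hij
      · rw [Nat.factorial_succ, Nat.cast_mul, Nat.cast_succ, mul_assoc]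
        exact mul_le_mul (by gcongr) (ih j) (by positivity) (by positivity)
      · rw [Polynomial.coeff_eq_zero_of_natDegree_lt ((descPochhammer_natDegree ℝ i).trans_lt hij),
          abs_zero, mul_zero]
        positivity
    calc (j.factorial : ℝ) * |(descPochhammer ℝ (i + 1)).coeff j|
        ≤ j.factorial * (|(descPochhammer ℝ i * Polynomial.X).coeff j| +
            i * |(descPochhammer ℝ i).coeff j|) := by
          rw [descPochhammer_succ_right, mul_sub, Polynomial.coeff_sub,
            Polynomial.coeff_mul_natCast]
          gcongr
          refine (abs_sub _ _).trans_eq ?_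
          rw [abs_mul, Nat.abs_cast, mul_comm (i : ℝ)]
      _ = j.factorial * |(descPochhammer ℝ i * Polynomial.X).coeff j| +
            i * (j.factorial * |(descPochhammer ℝ i).coeff j|) := by ring
      _ ≤ (i + 1) * (2 ^ i * i.factorial) + (i + 1) * (2 ^ i * i.factorial) := by
          exact add_le_add hshift
            (mul_le_mul (lt_add_one _).le (ih j) (by positivity) (by positivity))
      _ = 2 ^ (i + 1) * (i + 1).factorial := by
          rw [Nat.factorial_succ]
          push_cast
          ring

variable {σ R K : Type*} [Fintype σ] [DecidableEq σ] [CommRing R] [Field K]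

/-- The mixed forward difference at the origin, of order `p s` and step `1` in the variable `s`;
these are the coefficients of the multivariate Newton expansion. -/
def mixedDiff (p : σ → ℕ) (f : (σ → R) → R) : R :=
  ∑ a ∈ Fintype.piFinset fun s => Finset.range (p s + 1),
    (∏ s, (-1) ^ (p s - a s) * ((p s).choose (a s) : R)) * f fun s => a s

theorem mixedDiff_prod_pow (p c : σ → ℕ) :
    mixedDiff p (fun v : σ → R => ∏ s, v s ^ c s) =
      ∏ s, (fwdDiff 1)^[p s] (fun z : R => z ^ c s) 0 := by
  simp only [mixedDiff, fwdDiff_iter_eq_sum_shift, Finset.prod_univ_sum, ← Finset.prod_mul_distrib,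
    zero_add, nsmul_eq_mul, mul_one, zsmul_eq_mul, Int.cast_mul, Int.cast_pow, Int.cast_neg,
    Int.cast_one, Int.cast_natCast]

theorem mixedDiff_eval (p : σ → ℕ) (g : MvPolynomial σ R) :
    mixedDiff p (fun v => eval v g) =
      ∑ c ∈ g.support, coeff c g * ∏ s, (fwdDiff 1)^[p s] (fun z : R => z ^ c s) 0 := by
  simp only [← mixedDiff_prod_pow, mixedDiff, eval_eq', Finset.mul_sum]
  rw [Finset.sum_comm]
  simp only [mul_left_comm]

theorem abs_mixedDiff_le {p : σ → ℕ} {f : (σ → ℝ) → ℝ} {M : ℝ}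
    (hf : ∀ a : σ → ℕ, a ≤ p → |f fun s => a s| ≤ M) : |mixedDiff p f| ≤ (∏ s, 2 ^ p s) * M := by
  calc |mixedDiff p f|
      ≤ ∑ a ∈ Fintype.piFinset fun s => Finset.range (p s + 1),
          (∏ s, ((p s).choose (a s) : ℝ)) * M := by
        refine (Finset.abs_sum_le_sum_abs _ _).trans (Finset.sum_le_sum fun a ha => ?_)
        have hap : a ≤ p := fun s =>
          Nat.lt_succ_iff.1 (Finset.mem_range.1 (Fintype.mem_piFinset.1 ha s))
        simp only [abs_mul, Finset.abs_prod, abs_pow, abs_neg, abs_one, one_pow, one_mul,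
          Nat.abs_cast]
        exact mul_le_mul_of_nonneg_left (hf a hap) (by positivity)
    _ = (∏ s, 2 ^ p s) * M := by
        rw [← Finset.sum_mul, ← Finset.prod_univ_sum (fun s => Finset.range (p s + 1)) fun s a =>
          ((p s).choose a : ℝ)]
        simp only [← Nat.cast_sum, Nat.sum_range_choose, Nat.cast_pow, Nat.cast_ofNat]

variable (σ) in
/-- The exponent vectors of total degree at most `D`, which index the Newton expansion of a
polynomial of that degree. -/
def multiIndicesLE (D : ℕ) : Finset (σ → ℕ) :=
  (Finset.range (D + 1)).biUnion (Finset.piAntidiag Finset.univ)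

theorem mem_multiIndicesLE {D : ℕ} {p : σ → ℕ} : p ∈ multiIndicesLE σ D ↔ ∑ s, p s ≤ D := by
  simp [multiIndicesLE]

theorem sum_multiIndicesLE {M : Type*} [NonAssocSemiring M] (D : ℕ) (f : ℕ → M) :
    ∑ p ∈ multiIndicesLE σ D, f (∑ s, p s) =
      ∑ n ∈ Finset.range (D + 1), (Finset.piAntidiag (Finset.univ : Finset σ) n).card * f n := by
  have hdisj : (Finset.range (D + 1) : Set ℕ).PairwiseDisjoint
      (Finset.piAntidiag (Finset.univ : Finset σ)) := fun m _ n _ hmn =>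
    Finset.disjoint_left.2 fun p hm hn =>
      hmn ((Finset.mem_piAntidiag.1 hm).1.symm.trans (Finset.mem_piAntidiag.1 hn).1)
  rw [multiIndicesLE, Finset.sum_biUnion hdisj]
  refine Finset.sum_congr rfl fun n _ => ?_
  rw [Finset.sum_congr rfl fun p hp => congrArg f (Finset.mem_piAntidiag.1 hp).1,
    Finset.sum_const, nsmul_eq_mul]

theorem sum_multiIndicesLE_prod_fwdDiff_mul_coeff [CharZero K] {D : ℕ} {c : σ → ℕ}
    (hc : ∑ s, c s ≤ D) (e : σ → ℕ) :
    ∑ p ∈ multiIndicesLE σ D, ∏ s, (fwdDiff 1)^[p s] (fun z : K => z ^ c s) 0 /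
      (p s).factorial * (descPochhammer K (p s)).coeff (e s) = if e = c then 1 else 0 := by
  have hcoeff (s : σ) : ∑ i ∈ Finset.range (D + 1), (fwdDiff 1)^[i] (fun z : K => z ^ c s) 0 /
      i.factorial * (descPochhammer K i).coeff (e s) = if e s = c s then 1 else 0 := by
    have hcs : c s ≤ D :=
      (Finset.single_le_sum (fun _ _ => Nat.zero_le _) (Finset.mem_univ s)).trans hc
    have := congrArg (Polynomial.coeff · (e s)) (eq_sum_fwdDiff_mul_descPochhammer
      ((Polynomial.natDegree_X_pow_le (R := K) (c s)).trans hcs))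
    simpa only [Polynomial.coeff_X_pow, Polynomial.finsetSum_coeff, Polynomial.coeff_C_mul,
      Polynomial.eval_pow, Polynomial.eval_X] using this.symm
  calc _ = ∑ p ∈ Fintype.piFinset fun _ => Finset.range (D + 1), ∏ s,
        (fwdDiff 1)^[p s] (fun z : K => z ^ c s) 0 /
          (p s).factorial * (descPochhammer K (p s)).coeff (e s) := by
        refine Finset.sum_subset (fun p hp => ?_) fun p _ hp => ?_
        · refine Fintype.mem_piFinset.2 fun s => Finset.mem_range.2 (Nat.lt_succ_iff.2 ?_)
          exact (Finset.single_le_sum (fun _ _ => Nat.zero_le _) (Finset.mem_univ s)).trans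
            (mem_multiIndicesLE.1 hp)
        · rw [mem_multiIndicesLE, not_le] at hp
          obtain ⟨s, hs, hlt⟩ := Finset.exists_lt_of_sum_lt (hc.trans_lt hp)
          refine Finset.prod_eq_zero hs ?_
          rw [fwdDiff_iter_pow_eq_zero_of_lt hlt, Pi.zero_apply, zero_div, zero_mul]
    _ = if e = c then 1 else 0 := by
        rw [Finset.sum_prod_piFinset (Finset.range (D + 1)) fun s i =>
          (fwdDiff 1)^[i] (fun z : K => z ^ c s) 0 / i.factorial *
            (descPochhammer K i).coeff (e s), Finset.prod_congr rfl fun s _ => hcoeff s,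
          Finset.prod_ite_zero]
        simp [funext_iff]

theorem coeff_eq_sum_mixedDiff [CharZero K] {D : ℕ} {g : MvPolynomial σ K} (hg : g.totalDegree ≤ D)
    (e : σ →₀ ℕ) :
    coeff e g = ∑ p ∈ multiIndicesLE σ D, mixedDiff p (fun v => eval v g) *
      ∏ s, (descPochhammer K (p s)).coeff (e s) / (p s).factorial := by
  have hdeg (c : σ →₀ ℕ) (hc : c ∈ g.support) : ∑ s, c s ≤ D := by
    rw [← c.sum_fintype (fun _ n => n) fun _ => rfl]
    exact (le_totalDegree hc).trans hg
  calc coeff e g = ∑ c ∈ g.support, coeff c g * if (e : σ → ℕ) = c then 1 else 0 := by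
        simp [DFunLike.coe_fn_eq]
    _ = _ := by
        simp only [mixedDiff_eval, Finset.sum_mul]
        rw [Finset.sum_comm]
        refine Finset.sum_congr rfl fun c hc => ?_
        rw [← sum_multiIndicesLE_prod_fwdDiff_mul_coeff (hdeg c hc), Finset.mul_sum]
        refine Finset.sum_congr rfl fun p _ => ?_
        rw [mul_assoc, ← Finset.prod_mul_distrib]
        simp only [div_mul_eq_mul_div, mul_div_assoc]

theorem prod_factorial_mul_abs_coeff_le {D : ℕ} {M : ℝ} {g : MvPolynomial σ ℝ}
    (hg : g.totalDegree ≤ D) (hM : ∀ a : σ → ℕ, ∑ s, a s ≤ D → |eval (fun s => (a s : ℝ)) g| ≤ M)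
    (e : σ →₀ ℕ) :
    (∏ s, ((e s).factorial : ℝ)) * |coeff e g| ≤
      (∑ p ∈ multiIndicesLE σ D, 4 ^ ∑ s, p s) * M := by
  have hterm (p : σ → ℕ) (hp : p ∈ multiIndicesLE σ D) :
      (∏ s, ((e s).factorial : ℝ)) * |mixedDiff p (fun v => eval v g) *
        ∏ s, (descPochhammer ℝ (p s)).coeff (e s) / (p s).factorial| ≤ 4 ^ (∑ s, p s) * M := by
    have hdiff : |mixedDiff p fun v => eval v g| ≤ (∏ s, 2 ^ p s) * M :=
      abs_mixedDiff_le fun a hap =>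
        hM a ((Finset.sum_le_sum fun s _ => hap s).trans (mem_multiIndicesLE.1 hp))
    have hbasis : (∏ s, ((e s).factorial : ℝ)) *
        |∏ s, (descPochhammer ℝ (p s)).coeff (e s) / (p s).factorial| ≤ ∏ s, 2 ^ p s := by
      rw [Finset.abs_prod, ← Finset.prod_mul_distrib]
      refine Finset.prod_le_prod (fun s _ => by positivity) fun s _ => ?_
      rw [abs_div, Nat.abs_cast, ← mul_div_assoc, div_le_iff₀ (by positivity)]
      exact factorial_mul_abs_coeff_descPochhammer_le _ _
    calc _ = ((∏ s, ((e s).factorial : ℝ)) *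
              |∏ s, (descPochhammer ℝ (p s)).coeff (e s) / (p s).factorial|) *
            |mixedDiff p fun v => eval v g| := by rw [abs_mul, mul_left_comm, mul_comm]
      _ ≤ (∏ s, 2 ^ p s) * ((∏ s, 2 ^ p s) * M) :=
          mul_le_mul hbasis hdiff (abs_nonneg _) (by positivity)
      _ = 4 ^ (∑ s, p s) * M := by
          simp only [← mul_assoc, Finset.prod_pow_eq_pow_sum, ← mul_pow]
          norm_num
  calc _ ≤ ∑ p ∈ multiIndicesLE σ D, 4 ^ (∑ s, p s) * M := by
        rw [coeff_eq_sum_mixedDiff hg e]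
        refine (mul_le_mul_of_nonneg_left (Finset.abs_sum_le_sum_abs _ _) (by positivity)).trans ?_
        rw [Finset.mul_sum]
        exact Finset.sum_le_sum hterm
    _ = _ := (Finset.sum_mul _ _ _).symm

end NewtonInterpolation

section Bounded

open MvPolynomial

theorem factorial_sum_le {σ : Type*} [Fintype σ] (e : σ → ℕ) :
    (∑ s, e s).factorial ≤ Fintype.card σ ^ (∑ s, e s) * ∏ s, (e s).factorial := by
  classical
  have hmultinomial : Nat.multinomial Finset.univ e ≤ Fintype.card σ ^ (∑ s, e s) := by
    have hsum := Finset.sum_pow_eq_sum_piAntidiag (Finset.univ : Finset σ) (fun _ => 1) (∑ s, e s)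
    simp only [Finset.sum_const, Finset.card_univ, smul_eq_mul, mul_one, one_pow,
      Finset.prod_const_one, Nat.cast_id] at hsum
    rw [hsum]
    exact Finset.single_le_sum (f := Nat.multinomial Finset.univ) (fun _ _ => Nat.zero_le _)
      (Finset.mem_piAntidiag.2 ⟨rfl, fun s _ => Finset.mem_univ s⟩)
  rw [← Nat.multinomial_spec, mul_comm]
  exact Nat.mul_le_mul_right _ hmultinomial

theorem mvBounded_of_abs_eval_le {σ : Type*} [Fintype σ] [DecidableEq σ] [Nonempty σ]
    {D d : ℕ} {M C : ℝ} {g : MvPolynomial σ ℝ} (hg : g.totalDegree ≤ D) (hDd : D ≤ d)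
    (hM : ∀ a : σ → ℕ, ∑ s, a s ≤ D → |eval (fun s => (a s : ℝ)) g| ≤ M)
    (hC : Fintype.card σ ^ D * ((∑ p ∈ multiIndicesLE σ D, 4 ^ ∑ s, p s) * M) ≤ C) :
    MvBounded d C g := by
  refine ⟨hg.trans hDd, fun e _ => ?_⟩
  have hM0 : 0 ≤ M := (abs_nonneg _).trans (hM 0 (by simp))
  have hdeg : monomialDeg e = ∑ s, e s := e.sum_fintype _ fun _ => rfl
  rw [le_div_iff₀' (by positivity), hdeg]
  refine le_trans ?_ hC
  rcases lt_or_ge D (∑ s, e s) with hlt | hle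
  · rw [coeff_eq_zero_of_totalDegree_lt (hg.trans_lt (hlt.trans_eq hdeg.symm)), abs_zero, mul_zero]
    positivity
  calc ((∑ s, e s).factorial : ℝ) * |coeff e g|
      ≤ (Fintype.card σ ^ (∑ s, e s) * ∏ s, ((e s).factorial : ℝ)) * |coeff e g| := by
        gcongr
        exact_mod_cast factorial_sum_le e
    _ ≤ Fintype.card σ ^ D * ((∑ p ∈ multiIndicesLE σ D, 4 ^ ∑ s, p s) * M) := by
        rw [mul_assoc]
        gcongr ?_ * ?_
        · refine pow_le_pow_right₀ ?_ hle
          exact_mod_cast Fintype.card_pos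
        · exact prod_factorial_mul_abs_coeff_le hg hM e

theorem IsPolySumSq.exists_mvSoSBounded {σ : Type*} [Fintype σ] [DecidableEq σ] [Nonempty σ]
    {n D d : ℕ} {B C : ℝ} {f : (σ → ℝ) → ℝ} (hf : IsPolySumSq n D f) (hDd : D ≤ d)
    (hB : ∀ a : σ → ℕ, ∑ s, a s ≤ D → f (fun s => a s) ≤ B)
    (hC : Fintype.card σ ^ D * ((∑ p ∈ multiIndicesLE σ D, 4 ^ ∑ s, p s) * √B) ≤ C) :
    ∃ F : MvPolynomial σ ℝ, (∀ v, eval v F = f v) ∧ MvSoSBounded n d C F := by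
  obtain ⟨g, hg, hfg⟩ := hf
  refine ⟨∑ i, g i ^ 2, fun v => by simp only [hfg, map_sum, map_pow], g, fun i => ?_, rfl⟩
  refine mvBounded_of_abs_eval_le (hg i) hDd (fun a ha => Real.abs_le_sqrt ?_) hC
  refine le_trans ?_ (hB a ha)
  rw [hfg]
  exact Finset.single_le_sum (f := fun i => eval _ (g i) ^ 2) (fun _ _ => sq_nonneg _)
    (Finset.mem_univ i)

end Bounded

section Numerics

theorem sum_multiIndicesLE_four_pow_le {D : ℕ} (hD : 3 ≤ D) :
    ∑ p ∈ multiIndicesLE (Fin 2) D, (4 : ℝ) ^ ∑ s, p s ≤ 7 ^ D := by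
  have hcard (n : ℕ) : (Finset.piAntidiag (Finset.univ : Finset (Fin 2)) n).card = n + 1 := by
    simp [Finset.piAntidiag_univ_fin_eq_antidiagonalTuple, Finset.Nat.antidiagonalTuple_two]
  have hsum (n : ℕ) : 3 * ∑ i ∈ Finset.range n, ((i + 1 : ℕ) : ℝ) * 4 ^ i ≤ n * 4 ^ n := by
    induction n with
    | zero => simp
    | succ n ih =>
      rw [Finset.sum_range_succ, mul_add, pow_succ]
      push_cast at ih ⊢
      linarith [pow_pos (four_pos : (0 : ℝ) < 4) n]
  have hpow : (D + 1) * (4 : ℝ) ^ (D + 1) ≤ 3 * 7 ^ D := by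
    induction D, hD using Nat.le_induction with
    | base => norm_num
    | succ n hn ih =>
      have hcoef : ((n + 1 : ℕ) + 1 : ℝ) * 4 ≤ 7 * (n + 1) := by
        exact_mod_cast (by omega : (n + 1 + 1) * 4 ≤ 7 * (n + 1))
      calc ((n + 1 : ℕ) + 1 : ℝ) * 4 ^ (n + 1 + 1)
          = ((n + 1 : ℕ) + 1) * 4 * 4 ^ (n + 1) := by rw [pow_succ', mul_assoc]
        _ ≤ 7 * (n + 1) * 4 ^ (n + 1) := by gcongr
        _ ≤ 7 * (3 * 7 ^ n) := by rw [mul_assoc]; gcongr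
        _ = 3 * 7 ^ (n + 1) := by rw [pow_succ', mul_left_comm]
  have := hsum (D + 1)
  rw [sum_multiIndicesLE D fun n => (4 : ℝ) ^ n]
  simp only [hcard]
  push_cast at this ⊢
  linarith

theorem cubic_mul_pow_le {N : ℕ} (hN : 2 ≤ N) :
    0.5 * ((N : ℝ) + 1) * (1 + 0.25 * ((N : ℝ) + 1) ^ 2) * 588 ^ (N + 1) ≤ 40000 ^ N := by
  induction N, hN using Nat.le_induction with
  | base => norm_num
  | succ n _ ih =>
    have hlin : ((n + 1 : ℕ) : ℝ) + 1 ≤ 2 * (n + 1) := by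
      push_cast
      linarith [n.cast_nonneg (α := ℝ)]
    calc _ ≤ 0.5 * (2 * ((n : ℝ) + 1)) * (4 + 0.25 * (2 * (n + 1)) ^ 2) * 588 ^ (n + 1 + 1) := by
          gcongr
          norm_num
      _ = 4704 * (0.5 * ((n : ℝ) + 1) * (1 + 0.25 * ((n : ℝ) + 1) ^ 2) * 588 ^ (n + 1)) := by ring
      _ ≤ 40000 * 40000 ^ n := by
          gcongr
          norm_num
      _ = 40000 ^ (n + 1) := (pow_succ' _ _).symm

theorem card_pow_mul_sum_multiIndicesLE_mul_sqrt_le {N : ℕ} (hN : 2 ≤ N) :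
    Fintype.card (Fin 2) ^ (N + 1) * ((∑ p ∈ multiIndicesLE (Fin 2) (N + 1), 4 ^ ∑ s, p s) *
      √(0.5 * ((N + 1 : ℕ) : ℝ) * (1 + 0.25 * ((N + 1 : ℕ) : ℝ) ^ 2) * Real.exp (N + 1 : ℕ))) ≤
        (200 : ℝ) ^ N := by
  have hsum := sum_multiIndicesLE_four_pow_le (D := N + 1) (by omega)
  have hexp : Real.exp (N + 1 : ℕ) ≤ 3 ^ (N + 1) := by
    rw [← Real.exp_one_pow]
    gcongr
    exact Real.exp_one_lt_three.le
  refine (sq_le_sq₀ (by positivity) (by positivity)).1 ?_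
  rw [mul_pow, mul_pow, Real.sq_sqrt (by positivity)]
  calc _ ≤ ((2 : ℕ) ^ (N + 1) : ℝ) ^ 2 * ((7 ^ (N + 1)) ^ 2 * (0.5 * ((N + 1 : ℕ) : ℝ) *
        (1 + 0.25 * ((N + 1 : ℕ) : ℝ) ^ 2) * 3 ^ (N + 1))) := by
          rw [Fintype.card_fin]
          gcongr
    _ = 0.5 * ((N : ℝ) + 1) * (1 + 0.25 * ((N : ℝ) + 1) ^ 2) * 588 ^ (N + 1) := by
        rw [show (588 : ℝ) = 2 ^ 2 * 7 ^ 2 * 3 by norm_num, mul_pow, mul_pow, pow_right_comm 2,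
          pow_right_comm 7]
        push_cast
        ring
    _ ≤ 40000 ^ N := cubic_mul_pow_le hN
    _ = (200 ^ N) ^ 2 := by rw [← pow_mul, mul_comm, pow_mul]; norm_num

end Numerics


/-- **Sum-of-squares part of Theorem 4.4.** For all positive integers `k, ℓ`, the
bivariate polynomial `0.5(x-y)(1+0.25(x-y)²)(q_{k,ℓ}(x) - q_{k,ℓ}(y)) - 0.00025(x-y)² p_{k,ℓ}(x)`
is a `(10^{2^k ℓ}, 2^k ℓ + 10, 200^{2^k ℓ})`-bounded sum-of-squares polynomial in `x, y`. -/
theorem monotone_flat_approx_sos (k ℓ : ℕ) (hk : 0 < k) (hℓ : 0 < ℓ) :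
    ∃ F : MvPolynomial (Fin 2) ℝ,
      (∀ x y : ℝ, MvPolynomial.eval ![x, y] F =
        0.5 * (x - y) * (1 + 0.25 * (x - y) ^ 2) * (qkl k ℓ x - qkl k ℓ y)
          - 0.00025 * (x - y) ^ 2 * pkl k ℓ x) ∧
      MvSoSBounded (10 ^ (2 ^ k * ℓ)) (2 ^ k * ℓ + 10) ((200 : ℝ) ^ (2 ^ k * ℓ)) F := by
  have hN : 2 ≤ 2 ^ k * ℓ := Nat.mul_le_mul (Nat.le_self_pow hk.ne' 2) hℓ
  have hsos := isPolySumSq_monotonicityGap_pklPoly k hℓ (0 : Fin 2) 1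
  obtain ⟨F, hF, hbounded⟩ := hsos.exists_mvSoSBounded (d := 2 ^ k * ℓ + 10) (by omega)
    (fun _ ha => monotonicityGap_pklPoly_natCast_le k ℓ ha)
    (card_pow_mul_sum_multiIndicesLE_mul_sqrt_le hN)
  exact ⟨F, fun x y => (hF ![x, y]).trans (monotonicityGap_pklPoly k ℓ x y), hbounded⟩
end

section
/- For every integer ℓ ≥ 1 and every real number x, |s_{2ℓ−1}(x)| < 99·s_{2ℓ}(x). -/
open scoped BigOperators

/-!
Write `n` for an even degree. Since `sₙ' = sₙ - xⁿ/n!`, the function `e⁻ˣ sₙ(x)` has derivative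
`-e⁻ˣ xⁿ/n! ≤ 0`, so `sₙ(x) ≥ eˣ > 0` for `x ≤ 0`. As `sₙ₋₁ = sₙ - xⁿ/n!`, the bound
`|sₙ₋₁| < c sₙ` reduces to `xⁿ/n! < (c + 1) sₙ(x)`, which is only in doubt for `x < 0`.

* If `-n/c ≤ x ≤ 0`, then `nⁿ/n! ≤ eⁿ` gives `xⁿ/n! ≤ (e/c)ⁿ ≤ eˣ ≤ sₙ(x)`, provided
  `e^(1 + 1/c) ≤ c`.
* If `x ≤ -n/c`, then `e⁻ˣ ((c + 1) sₙ(x) - xⁿ/n!)` is decreasing in `x`, hence at least its value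
  at `-n/c`, which is positive by the first case.
-/

section

open Set
open scoped Nat

lemma taylorExp_succ (n : ℕ) (x : ℝ) :
    taylorExp (n + 1) x = taylorExp n x + x ^ (n + 1) / (n + 1)! :=
  Finset.sum_range_succ ..

lemma taylorExp_apply_zero (n : ℕ) : taylorExp n 0 = 1 := by
  simp [taylorExp, Finset.sum_range_succ']

lemma one_le_taylorExp_of_nonneg (n : ℕ) {x : ℝ} (hx : 0 ≤ x) : 1 ≤ taylorExp n x := by
  rw [taylorExp, Finset.sum_range_succ', pow_zero, Nat.factorial_zero, Nat.cast_one, div_one]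
  exact le_add_of_nonneg_left (by positivity)

lemma hasDerivAt_pow_succ_div_factorial (n : ℕ) (x : ℝ) :
    HasDerivAt (fun x : ℝ ↦ x ^ (n + 1) / (n + 1)!) (x ^ n / n !) x := by
  refine ((hasDerivAt_pow (n + 1) x).div_const _).congr_deriv ?_
  rw [Nat.factorial_succ, Nat.add_sub_cancel, Nat.cast_mul]
  field_simp

lemma hasDerivAt_taylorExp (n : ℕ) (x : ℝ) :
    HasDerivAt (taylorExp n) (taylorExp n x - x ^ n / n !) x := by
  induction n with
  | zero =>
    have h_one : taylorExp 0 = fun _ ↦ 1 := by ext; simp [taylorExp]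
    simpa [h_one] using hasDerivAt_const x (1 : ℝ)
  | succ n ih =>
    rw [funext (taylorExp_succ n)]
    exact (ih.add (hasDerivAt_pow_succ_div_factorial n x)).congr_deriv (by ring)

lemma hasDerivAt_exp_neg_mul {f : ℝ → ℝ} {f' x : ℝ} (hf : HasDerivAt f f' x) :
    HasDerivAt (fun x ↦ Real.exp (-x) * f x) (Real.exp (-x) * (f' - f x)) x :=
  ((hasDerivAt_neg x).exp.mul hf).congr_deriv (by ring)

lemma antitone_exp_neg_mul_taylorExp {n : ℕ} (hn : Even n) :
    Antitone fun x ↦ Real.exp (-x) * taylorExp n x := by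
  refine antitone_of_hasDerivAt_nonpos
    (fun x ↦ hasDerivAt_exp_neg_mul (hasDerivAt_taylorExp n x)) fun x ↦ ?_
  have h_term : 0 ≤ x ^ n / n ! := div_nonneg (hn.pow_nonneg x) (by positivity)
  exact mul_nonpos_of_nonneg_of_nonpos (Real.exp_pos _).le (by linarith)

lemma exp_le_taylorExp_of_nonpos {n : ℕ} (hn : Even n) {x : ℝ} (hx : x ≤ 0) :
    Real.exp x ≤ taylorExp n x := by
  have h : 1 ≤ Real.exp (-x) * taylorExp n x := by
    simpa [taylorExp_apply_zero] using antitone_exp_neg_mul_taylorExp hn hx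
  rwa [Real.exp_neg, ← div_eq_inv_mul, one_le_div (Real.exp_pos x)] at h

lemma taylorExp_pos_of_even {n : ℕ} (hn : Even n) (x : ℝ) : 0 < taylorExp n x := by
  rcases le_total 0 x with hx | hx
  · exact one_pos.trans_le (one_le_taylorExp_of_nonneg n hx)
  · exact (Real.exp_pos x).trans_le (exp_le_taylorExp_of_nonpos hn hx)

lemma antitoneOn_exp_neg_mul_taylorExp_sub {c : ℝ} (hc : 0 < c) {m : ℕ} (hm : Odd m) :
    AntitoneOn
      (fun x ↦ Real.exp (-x) * ((c + 1) * taylorExp (m + 1) x - x ^ (m + 1) / (m + 1)!))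
      (Iic (-(m + 1) / c)) := by
  have h_deriv (x : ℝ) := hasDerivAt_exp_neg_mul
    (((hasDerivAt_taylorExp (m + 1) x).const_mul (c + 1)).sub
      (hasDerivAt_pow_succ_div_factorial m x))
  refine antitoneOn_of_hasDerivWithinAt_nonpos (convex_Iic _)
    (fun x _ ↦ (h_deriv x).continuousAt.continuousWithinAt)
    (fun x _ ↦ (h_deriv x).hasDerivWithinAt) fun x hx ↦ ?_
  have h_le : x ≤ -(m + 1) / c := mem_Iic.1 (interior_subset hx)
  have h_cx : c * x + (m + 1) ≤ 0 := by
    rw [le_div_iff₀ hc] at h_le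
    linarith
  have hx_nonpos : x ≤ 0 :=
    h_le.trans (div_nonpos_of_nonpos_of_nonneg (by linarith [m.cast_nonneg (α := ℝ)]) hc.le)
  have h_factor : 0 ≤ x ^ m / (m + 1)! * (c * x + (m + 1)) :=
    mul_nonneg_of_nonpos_of_nonpos
      (div_nonpos_of_nonpos_of_nonneg (hm.pow_nonpos hx_nonpos) (by positivity)) h_cx
  refine mul_nonpos_of_nonneg_of_nonpos (Real.exp_pos _).le
    (le_of_eq_of_le ?_ (neg_nonpos.2 h_factor))
  simp only [Pi.sub_apply, Nat.factorial_succ, Nat.cast_mul, Nat.cast_add_one]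
  field_simp
  ring

variable {c : ℝ}

lemma exp_one_add_inv_le (hc : 4 ≤ c) : Real.exp (1 + c⁻¹) ≤ c := by
  have h_pow : Real.exp (5 / 4) ^ 4 ≤ 4 ^ 4 := by
    calc Real.exp (5 / 4) ^ 4 = Real.exp 1 ^ 5 := by
          rw [← Real.exp_nat_mul, ← Real.exp_nat_mul]; norm_num
      _ ≤ 3 ^ 5 := by gcongr; exact Real.exp_one_lt_three.le
      _ ≤ 4 ^ 4 := by norm_num
  calc Real.exp (1 + c⁻¹) ≤ Real.exp (1 + 4⁻¹) := by gcongr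
    _ = Real.exp (5 / 4) := by norm_num
    _ ≤ 4 := le_of_pow_le_pow_left₀ four_ne_zero (by norm_num) h_pow
    _ ≤ c := hc

lemma pow_div_factorial_le_exp_neg (hc : Real.exp (1 + c⁻¹) ≤ c) {n : ℕ} {y : ℝ} (hy : 0 ≤ y)
    (hyn : c * y ≤ n) : y ^ n / n ! ≤ Real.exp (-y) := by
  have hc_pos : 0 < c := (Real.exp_pos _).trans_le hc
  have h_exp : Real.exp n * Real.exp y ≤ c ^ n := by
    calc Real.exp n * Real.exp y ≤ Real.exp n * Real.exp (n * c⁻¹) := by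
          gcongr
          rwa [← div_eq_mul_inv, le_div_iff₀' hc_pos]
      _ = Real.exp (1 + c⁻¹) ^ n := by
          rw [← Real.exp_add, ← Real.exp_nat_mul, mul_add, mul_one]
      _ ≤ c ^ n := by gcongr
  have h_scaled : c ^ n * (y ^ n / n !) ≤ Real.exp n := by
    calc c ^ n * (y ^ n / n !) = (c * y) ^ n / n ! := by rw [mul_pow, mul_div_assoc]
      _ ≤ n ^ n / n ! := by gcongr
      _ ≤ Real.exp n := Real.pow_div_factorial_le_exp n n.cast_nonneg n
  rw [Real.exp_neg, ← one_div, le_div_iff₀ (Real.exp_pos y)]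
  refine le_of_mul_le_mul_left ?_ (pow_pos hc_pos n)
  calc c ^ n * (y ^ n / n ! * Real.exp y) = c ^ n * (y ^ n / n !) * Real.exp y := by ring
    _ ≤ Real.exp n * Real.exp y := by gcongr
    _ ≤ c ^ n * 1 := by rwa [mul_one]

lemma pow_div_factorial_le_taylorExp (hc : Real.exp (1 + c⁻¹) ≤ c) {n : ℕ} (hn : Even n) {x : ℝ}
    (hx : x ≤ 0) (hxn : -n ≤ c * x) : x ^ n / n ! ≤ taylorExp n x :=
  calc x ^ n / n ! = (-x) ^ n / n ! := by rw [hn.neg_pow]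
    _ ≤ Real.exp (-(-x)) :=
        pow_div_factorial_le_exp_neg hc (neg_nonneg.2 hx) (by linarith)
    _ = Real.exp x := by rw [neg_neg]
    _ ≤ taylorExp n x := exp_le_taylorExp_of_nonpos hn hx

lemma pow_div_factorial_lt_mul_taylorExp (hc : Real.exp (1 + c⁻¹) ≤ c) {m : ℕ} (hm : Odd m)
    (x : ℝ) : x ^ (m + 1) / (m + 1)! < (c + 1) * taylorExp (m + 1) x := by
  have hc_pos : 0 < c := (Real.exp_pos _).trans_le hc
  have h_lt_of_le {z : ℝ} (hz : z ^ (m + 1) / (m + 1)! ≤ taylorExp (m + 1) z) :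
      z ^ (m + 1) / (m + 1)! < (c + 1) * taylorExp (m + 1) z :=
    hz.trans_lt <| lt_mul_of_one_lt_left (taylorExp_pos_of_even hm.add_one z) (by linarith)
  set x₀ : ℝ := -(m + 1) / c with hx₀
  have hcx₀ : c * x₀ = -(m + 1 : ℕ) := by
    rw [hx₀, mul_div_cancel₀ _ hc_pos.ne', Nat.cast_add_one]
  have hx₀_nonpos : x₀ ≤ 0 :=
    div_nonpos_of_nonpos_of_nonneg (by linarith [m.cast_nonneg (α := ℝ)]) hc_pos.le
  rcases le_total 0 x with hx | hx
  · apply h_lt_of_le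
    linarith [taylorExp_succ m x, one_le_taylorExp_of_nonneg m hx]
  rcases le_total x₀ x with hx₀x | hxx₀
  · apply h_lt_of_le
    refine pow_div_factorial_le_taylorExp hc hm.add_one hx ?_
    rw [← hcx₀]
    gcongr
  · have h_at_x₀ : 0 < (c + 1) * taylorExp (m + 1) x₀ - x₀ ^ (m + 1) / (m + 1)! :=
      sub_pos.2 <| h_lt_of_le <|
        pow_div_factorial_le_taylorExp hc hm.add_one hx₀_nonpos hcx₀.ge
    have h_at_x := (mul_pos (Real.exp_pos (-x₀)) h_at_x₀).trans_le
      (antitoneOn_exp_neg_mul_taylorExp_sub hc_pos hm hxx₀ self_mem_Iic hxx₀)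
    exact sub_pos.1 (pos_of_mul_pos_right h_at_x (Real.exp_pos _).le)

theorem odd_truncation_lt_even_general (hc : Real.exp (1 + c⁻¹) ≤ c) {m : ℕ} (hm : Odd m) (x : ℝ) :
    |taylorExp m x| < c * taylorExp (m + 1) x := by
  have hc_one : 1 < c :=
    (Real.one_lt_exp_iff.2 (by linarith [inv_pos.2 ((Real.exp_pos _).trans_le hc)])).trans_le hc
  have h_even_pos : taylorExp (m + 1) x < c * taylorExp (m + 1) x :=
    lt_mul_of_one_lt_left (taylorExp_pos_of_even hm.add_one x) hc_one
  have h_term_nonneg : 0 ≤ x ^ (m + 1) / (m + 1)! :=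
    div_nonneg (hm.add_one.pow_nonneg x) (by positivity)
  have h_term_lt := pow_div_factorial_lt_mul_taylorExp hc hm x
  have h_succ := taylorExp_succ m x
  rw [abs_lt]
  constructor <;> linarith

end

/-- **Odd truncations are dominated by even truncations** (Lemma B.1): for every
integer `ℓ ≥ 1` and every real `x`, `|s_{2ℓ-1}(x)| < 99 s_{2ℓ}(x)`. -/
theorem odd_truncation_lt_even (ℓ : ℕ) (hℓ : 1 ≤ ℓ) (x : ℝ) :
    |taylorExp (2 * ℓ - 1) x| < 99 * taylorExp (2 * ℓ) x := by
  obtain ⟨k, rfl⟩ := Nat.exists_eq_add_of_le' hℓ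
  exact odd_truncation_lt_even_general (exp_one_add_inv_le (by norm_num)) (odd_two_mul_add_one k) x
end

section
/- For all positive integers k, ℓ, the polynomial p_{k,ℓ} is ((2^{k+1} − 1)ℓ, 1)-bounded: it has degree (2^{k+1} − 1)ℓ and, for every natural number d, the coefficient of x^d in p_{k,ℓ} has magnitude at most 1/d!. Likewise, q_{k,ℓ} is ((2^{k+1} − 1)ℓ + 1, 1)-bounded. -/
open scoped BigOperators

/-- The degree-`ℓ` truncation of the Taylor series of `e^x`, as a real polynomial:
`sPoly ℓ = ∑_{k=0}^{ℓ} x^k/k!`. -/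
noncomputable def sPoly (ℓ : ℕ) : Polynomial ℝ :=
  ∑ k ∈ Finset.range (ℓ + 1), Polynomial.C (1 / (Nat.factorial k : ℝ)) * Polynomial.X ^ k

/-- `pPoly k ℓ = ∏_{j=1}^{k} s_{2^j ℓ}(x/k)`, as a real polynomial in `x`. -/
noncomputable def pPoly (k ℓ : ℕ) : Polynomial ℝ :=
  ∏ j ∈ Finset.Icc 1 k, (sPoly (2 ^ j * ℓ)).comp (Polynomial.C (1 / (k : ℝ)) * Polynomial.X)

/-- `qPoly k ℓ = 1 + ∫_0^x pPoly k ℓ (y) dy`, as a real polynomial in `x` (the shifted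
antiderivative of `pPoly k ℓ` with constant term `1`). -/
noncomputable def qPoly (k ℓ : ℕ) : Polynomial ℝ :=
  1 + ∑ n ∈ Finset.range ((pPoly k ℓ).natDegree + 1),
    Polynomial.C ((pPoly k ℓ).coeff n / ((n : ℝ) + 1)) * Polynomial.X ^ (n + 1)

/-!
Say that `p` is majorized by `e^{cx}` if its coefficients are bounded in norm by those of `e^{cx}`.
Since `e^{ax} e^{bx} = e^{(a+b)x}`, majorants multiply by adding exponents. Each of the `k` factors
`s_m(x/k)` of `p_{k,ℓ}` is majorized by `e^{x/k}`, so `p_{k,ℓ}` is majorized by `e^x`. Integration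
preserves this because `e^x` is its own derivative.
-/

section

open Finset.HasAntidiagonal (antidiagonal)
open Polynomial
open scoped Nat

/-- The polynomial `p` is *majorized by `e^{cx}`*: its coefficients are bounded in norm by the
Taylor coefficients of `e^{cx}`. A polynomial is `(d, 1)`-bounded if it has degree at most `d` and
is majorized by `e^x`; the rate `c` makes the coefficient bound multiplicative. -/
def ExpMajorized {R : Type*} [SeminormedRing R] (c : ℝ) (p : R[X]) : Prop :=
  ∀ n, ‖p.coeff n‖ ≤ c ^ n / n !

theorem sum_antidiagonal_pow_div_factorial {K : Type*} [Field K] [CharZero K] (a b : K) (n : ℕ) :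
    ∑ x ∈ antidiagonal n, a ^ x.1 / x.1 ! * (b ^ x.2 / x.2 !) = (a + b) ^ n / n ! := by
  simpa [PowerSeries.coeff_mul, PowerSeries.coeff_rescale, PowerSeries.coeff_exp, div_eq_mul_inv]
    using congrArg (PowerSeries.coeff n) (PowerSeries.exp_mul_exp_eq_exp_add a b)

namespace ExpMajorized

section Ring

variable {R : Type*} [SeminormedRing R] {a b c : ℝ} {p q : R[X]}

theorem nonneg (h : ExpMajorized c p) : 0 ≤ c :=
  (norm_nonneg _).trans (by simpa using h 1)

theorem mono (h : ExpMajorized a p) (hab : a ≤ b) : ExpMajorized b p := fun n => by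
  have ha := h.nonneg
  grw [h n, hab]

theorem one [NormOneClass R] : ExpMajorized 0 (1 : R[X]) := by
  rintro (_ | n) <;> simp [coeff_one]

theorem mul (hp : ExpMajorized a p) (hq : ExpMajorized b q) : ExpMajorized (a + b) (p * q) :=
  fun n => calc
    ‖(p * q).coeff n‖ ≤ ∑ x ∈ antidiagonal n, ‖p.coeff x.1 * q.coeff x.2‖ := by
      rw [coeff_mul]
      exact norm_sum_le _ _
    _ ≤ ∑ x ∈ antidiagonal n, a ^ x.1 / x.1 ! * (b ^ x.2 / x.2 !) :=
      Finset.sum_le_sum fun x _ => norm_mul_le_of_le (hp x.1) (hq x.2)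
    _ = (a + b) ^ n / n ! := sum_antidiagonal_pow_div_factorial a b n

theorem comp_C_mul_X [NormOneClass R] (hp : ExpMajorized c p) (r : R) :
    ExpMajorized (c * ‖r‖) (p.comp (C r * X)) := fun n => calc
  ‖(p.comp (C r * X)).coeff n‖ = ‖p.coeff n * r ^ n‖ := by rw [comp_C_mul_X_coeff]
  _ ≤ c ^ n / n ! * ‖r‖ ^ n := norm_mul_le_of_le (hp n) (norm_pow_le r n)
  _ = (c * ‖r‖) ^ n / n ! := by ring

theorem of_derivative [NormedSpace ℝ R] (hp : ExpMajorized c (derivative p))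
    (h0 : ‖p.coeff 0‖ ≤ 1) (hc : 1 ≤ c) : ExpMajorized c p
  | 0 => by simpa using h0
  | n + 1 => by
    have hnorm : (n + 1) * ‖p.coeff (n + 1)‖ = ‖(derivative p).coeff n‖ := by
      rw [coeff_derivative, ← Nat.cast_add_one, ← Nat.cast_add_one, ← nsmul_eq_mul',
        ← Nat.cast_smul_eq_nsmul ℝ, norm_smul, Real.norm_natCast]
    calc
      ‖p.coeff (n + 1)‖ = ‖(derivative p).coeff n‖ / (n + 1) := by
        rw [← hnorm, mul_div_cancel_left₀ _ n.cast_add_one_ne_zero]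
      _ ≤ c ^ n / n ! / (n + 1) := by grw [hp n]
      _ = c ^ n / (n + 1)! := by push_cast [Nat.factorial_succ]; field_simp
      _ ≤ c ^ (n + 1) / (n + 1)! := by grw [pow_le_pow_right₀ hc n.le_succ]

end Ring

theorem prod {R ι : Type*} [SeminormedCommRing R] [NormOneClass R] {s : Finset ι} {c : ι → ℝ}
    {p : ι → R[X]} (h : ∀ i ∈ s, ExpMajorized (c i) (p i)) :
    ExpMajorized (∑ i ∈ s, c i) (∏ i ∈ s, p i) := by
  classical
  induction s using Finset.induction_on with
  | empty => exact one
  | insert i s hi ih =>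
    rw [Finset.sum_insert hi, Finset.prod_insert hi]
    rw [Finset.forall_mem_insert] at h
    exact h.1.mul (ih h.2)

end ExpMajorized

theorem natDegree_comp_C_mul_X_le {R : Type*} [Semiring R] (p : R[X]) (r : R) :
    (p.comp (C r * X)).natDegree ≤ p.natDegree := by
  rw [natDegree_le_iff_coeff_eq_zero]
  intro n hn
  rw [comp_C_mul_X_coeff, coeff_eq_zero_of_natDegree_lt hn, zero_mul]

theorem coeff_sPoly (m n : ℕ) : (sPoly m).coeff n = if n ≤ m then 1 / (n ! : ℝ) else 0 := by
  simp [sPoly, coeff_X_pow]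

theorem natDegree_sPoly_le (m : ℕ) : (sPoly m).natDegree ≤ m := by
  rw [natDegree_le_iff_coeff_eq_zero]
  intro n hn
  rw [coeff_sPoly, if_neg hn.not_ge]

theorem expMajorized_sPoly (m : ℕ) : ExpMajorized 1 (sPoly m) := fun n => by
  rw [coeff_sPoly, one_pow]
  split_ifs
  · rw [Real.norm_of_nonneg (by positivity)]
  · rw [norm_zero]
    positivity

theorem natDegree_pPoly_le (k ℓ : ℕ) : (pPoly k ℓ).natDegree ≤ (2 ^ (k + 1) - 1) * ℓ := by
  have hgeom : ∑ j ∈ Finset.Icc 1 k, 2 ^ j < 2 ^ (k + 1) :=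
    Nat.geomSum_lt le_rfl fun j hj => Nat.lt_succ_of_le (Finset.mem_Icc.1 hj).2
  calc
    (pPoly k ℓ).natDegree
      ≤ ∑ j ∈ Finset.Icc 1 k, ((sPoly (2 ^ j * ℓ)).comp (C (1 / (k : ℝ)) * X)).natDegree :=
      natDegree_prod_le _ _
    _ ≤ ∑ j ∈ Finset.Icc 1 k, 2 ^ j * ℓ :=
      Finset.sum_le_sum fun j _ => (natDegree_comp_C_mul_X_le _ _).trans (natDegree_sPoly_le _)
    _ = (∑ j ∈ Finset.Icc 1 k, 2 ^ j) * ℓ := (Finset.sum_mul _ _ _).symm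
    _ ≤ (2 ^ (k + 1) - 1) * ℓ := Nat.mul_le_mul_right _ (Nat.le_sub_one_of_lt hgeom)

theorem expMajorized_pPoly (k ℓ : ℕ) : ExpMajorized 1 (pPoly k ℓ) := by
  have hprod : ExpMajorized (∑ j ∈ Finset.Icc 1 k, 1 * ‖1 / (k : ℝ)‖) (pPoly k ℓ) :=
    .prod fun j _ => (expMajorized_sPoly (2 ^ j * ℓ)).comp_C_mul_X (1 / (k : ℝ))
  refine hprod.mono ?_
  simpa using mul_inv_le_one

theorem derivative_qPoly (k ℓ : ℕ) : derivative (qPoly k ℓ) = pPoly k ℓ := by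
  have hcancel (n : ℕ) (x : ℝ) : x / (n + 1) * (n + 1) = x :=
    div_mul_cancel₀ x n.cast_add_one_ne_zero
  conv_rhs => rw [(pPoly k ℓ).as_sum_range_C_mul_X_pow]
  simp only [qPoly, derivative_add, derivative_one, zero_add, derivative_sum,
    derivative_C_mul_X_pow, Nat.cast_succ, hcancel, Nat.add_sub_cancel]

theorem coeff_zero_qPoly (k ℓ : ℕ) : (qPoly k ℓ).coeff 0 = 1 := by
  simp [qPoly]

theorem natDegree_qPoly_le (k ℓ : ℕ) : (qPoly k ℓ).natDegree ≤ (2 ^ (k + 1) - 1) * ℓ + 1 := by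
  rw [← Nat.sub_le_iff_le_add, ← natDegree_derivative, derivative_qPoly]
  exact natDegree_pPoly_le k ℓ

theorem expMajorized_qPoly (k ℓ : ℕ) : ExpMajorized 1 (qPoly k ℓ) := by
  refine .of_derivative ?_ ?_ le_rfl
  · rw [derivative_qPoly]
    exact expMajorized_pPoly k ℓ
  · rw [coeff_zero_qPoly, norm_one]

end

/-- **Claim 4.9.** For positive integers `k, ℓ`, the polynomial `p_{k,ℓ}` is
`((2^{k+1}-1)ℓ, 1)`-bounded: it has degree at most `(2^{k+1}-1)ℓ` and for every `d` the
coefficient of `x^d` has magnitude at most `1/d!`. Likewise, `q_{k,ℓ}` is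
`((2^{k+1}-1)ℓ + 1, 1)`-bounded. -/
theorem pPoly_qPoly_bounded (k ℓ : ℕ) (hk : 0 < k) (hℓ : 0 < ℓ) :
    ((pPoly k ℓ).natDegree ≤ (2 ^ (k + 1) - 1) * ℓ ∧
      ∀ d : ℕ, |(pPoly k ℓ).coeff d| ≤ 1 / (Nat.factorial d : ℝ)) ∧
    ((qPoly k ℓ).natDegree ≤ (2 ^ (k + 1) - 1) * ℓ + 1 ∧
      ∀ d : ℕ, |(qPoly k ℓ).coeff d| ≤ 1 / (Nat.factorial d : ℝ)) := by
  have hcoeff {p : Polynomial ℝ} (hp : ExpMajorized 1 p) (d : ℕ) :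
      |p.coeff d| ≤ 1 / (Nat.factorial d : ℝ) := by
    simpa only [Real.norm_eq_abs, one_pow] using hp d
  exact ⟨⟨natDegree_pPoly_le k ℓ, hcoeff (expMajorized_pPoly k ℓ)⟩,
    natDegree_qPoly_le k ℓ, hcoeff (expMajorized_qPoly k ℓ)⟩
end

section
/- Let p be a real polynomial in m variables of degree at most 2 such that p(y_1, …, y_m) ≥ 0 for all (y_1, …, y_m) ∈ ℝ^m. Then there exist polynomials l_1, …, l_{m+1} in m variables, each of degree at most 1, such that p = l_1^2 + ⋯ + l_{m+1}^2. -/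
open scoped BigOperators

/-!
In homogeneous coordinates `h = (1, X₁, …, X_m)` a polynomial of degree at most `2` is `hᵀ N h`
for a symmetric matrix `N`. Nonnegativity of the polynomial says that `vᵀ N v ≥ 0` whenever
`v₀ = 1`; by scaling this holds for `v₀ ≠ 0`, and by density for all `v`. So `N` is positive
semidefinite, hence `N = Bᵀ B`, and `hᵀ N h = ‖B h‖²` is the sum of the squares of the `m + 1`
entries of `B h`.
-/

section QuadraticForm

open Matrix

variable {n 𝕜 : Type*} [Fintype n] [Field 𝕜] [LinearOrder 𝕜] [IsStrictOrderedRing 𝕜]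

lemma dotProduct_mulVec_nonneg_of_apply_ne_zero {A : Matrix n n 𝕜} {i : n}
    (hA : ∀ v, v i = 1 → 0 ≤ v ⬝ᵥ A *ᵥ v) {v : n → 𝕜} (hv : v i ≠ 0) :
    0 ≤ v ⬝ᵥ A *ᵥ v := by
  have hscale : v = v i • (v i)⁻¹ • v := (smul_inv_smul₀ hv v).symm
  have hnormalized := hA ((v i)⁻¹ • v) (inv_mul_cancel₀ hv)
  rw [hscale, mulVec_smul, dotProduct_smul, smul_dotProduct, smul_smul]
  exact mul_nonneg (mul_self_nonneg _) hnormalized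

lemma dotProduct_mulVec_nonneg_of_apply_eq_one [TopologicalSpace 𝕜] [OrderTopology 𝕜]
    {A : Matrix n n 𝕜} {i : n} (hA : ∀ v, v i = 1 → 0 ≤ v ⬝ᵥ A *ᵥ v) (v : n → 𝕜) :
    0 ≤ v ⬝ᵥ A *ᵥ v := by
  have hdense : Dense {w : n → 𝕜 | w i ≠ 0} :=
    (dense_compl_singleton (0 : 𝕜)).preimage (isOpenMap_eval i)
  have hclosed : IsClosed {w : n → 𝕜 | 0 ≤ w ⬝ᵥ A *ᵥ w} :=
    isClosed_le continuous_const (by fun_prop)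
  exact hdense.induction (fun _ => dotProduct_mulVec_nonneg_of_apply_ne_zero hA) hclosed v

end QuadraticForm

section Gram

open MvPolynomial Matrix

variable {σ R : Type*} [CommSemiring R]

variable (σ R) in
/-- The homogeneous coordinates on the affine space with coordinates `X i`, `i : σ`: the constant
`1`, indexed by `none`, followed by the variables. -/
noncomputable def homogCoord : Option σ → MvPolynomial σ R :=
  fun i => i.elim 1 X

lemma totalDegree_homogCoord_le (i : Option σ) : (homogCoord σ R i).totalDegree ≤ 1 := by
  cases i with
  | none => simp [homogCoord]
  | some j => exact (totalDegree_monomial_le _ _).trans (by simp)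

lemma exists_homogCoord_mul_eq_prod_map_X {t : Multiset σ} (ht : t.card ≤ 2) :
    ∃ i j, homogCoord σ R i * homogCoord σ R j = (t.map X).prod := by
  obtain h | h | h : t.card = 0 ∨ t.card = 1 ∨ t.card = 2 := by omega
  · obtain rfl := Multiset.card_eq_zero.mp h
    exact ⟨none, none, by simp [homogCoord]⟩
  · obtain ⟨a, rfl⟩ := Multiset.card_eq_one.mp h
    exact ⟨none, some a, by simp [homogCoord]⟩
  · obtain ⟨a, b, rfl⟩ := Multiset.card_eq_two.mp h
    exact ⟨some a, some b, by simp [homogCoord]⟩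

lemma monomial_one_eq_prod_map_X (s : σ →₀ ℕ) :
    monomial s (1 : R) = (s.toMultiset.map X).prod := by
  rw [monomial_eq, C_1, one_mul, Finsupp.toMultiset_map, Finsupp.prod_toMultiset,
    Finsupp.prod_mapDomain_index pow_zero pow_add]

variable [Fintype σ]

/-- The polynomial `hᵀ N h` with Gram matrix `N`, where `h` is the vector of homogeneous
coordinates. Every polynomial of degree at most `2` has this form. -/
noncomputable def gramPoly : Matrix (Option σ) (Option σ) R →ₗ[R] MvPolynomial σ R where
  toFun N := homogCoord σ R ⬝ᵥ N.map C *ᵥ homogCoord σ R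
  map_add' M N := by
    rw [Matrix.map_add _ (map_add C), add_mulVec, dotProduct_add]
  map_smul' c N := by
    rw [Matrix.map_smul' _ _ _ (map_mul C), smul_mulVec, dotProduct_smul, smul_eq_mul,
      RingHom.id_apply, smul_eq_C_mul]

lemma gramPoly_apply (N : Matrix (Option σ) (Option σ) R) :
    gramPoly N = homogCoord σ R ⬝ᵥ N.map C *ᵥ homogCoord σ R := rfl

lemma gramPoly_transpose (N : Matrix (Option σ) (Option σ) R) : gramPoly Nᵀ = gramPoly N := by
  rw [gramPoly_apply, transpose_map, dotProduct_transpose_mulVec, gramPoly_apply]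

lemma gramPoly_single [DecidableEq σ] (i j : Option σ) (c : R) :
    gramPoly (Matrix.single i j c) = c • (homogCoord σ R i * homogCoord σ R j) := by
  rw [gramPoly_apply, Matrix.map_single, single_mulVec, smul_eq_C_mul, mul_left_comm]
  exact dotProduct_single _ _ _

lemma gramPoly_transpose_mul_self {κ : Type*} [Fintype κ] (B : Matrix κ (Option σ) R) :
    gramPoly (Bᵀ * B) = ∑ k, (B.map C *ᵥ homogCoord σ R) k ^ 2 := by
  rw [gramPoly_apply, Matrix.map_mul, ← mulVec_mulVec, dotProduct_mulVec, transpose_map,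
    vecMul_transpose]
  simp only [dotProduct, sq]

lemma eval_gramPoly (N : Matrix (Option σ) (Option σ) R) (v : Option σ → R) (hv : v none = 1) :
    eval (v ∘ some) (gramPoly N) = v ⬝ᵥ N *ᵥ v := by
  have hcoord : eval (v ∘ some) ∘ homogCoord σ R = v := by
    funext i
    cases i <;> simp [homogCoord, hv]
  have hmap : (N.map C).map (eval (v ∘ some)) = N := by
    ext
    simp only [map_apply, eval_C]
  have hmulVec : eval (v ∘ some) ∘ (N.map C *ᵥ homogCoord σ R) = N *ᵥ v := by
    funext i
    rw [Function.comp_apply, RingHom.map_mulVec, hcoord, hmap]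
  rw [gramPoly_apply, RingHom.map_dotProduct, hcoord, hmulVec]

lemma totalDegree_map_C_mulVec_homogCoord_le {κ : Type*} (B : Matrix κ (Option σ) R) (k : κ) :
    ((B.map C *ᵥ homogCoord σ R) k).totalDegree ≤ 1 := by
  refine totalDegree_finsetSum_le fun i _ => ?_
  simpa [← smul_eq_C_mul] using
    (totalDegree_smul_le (B k i) _).trans (totalDegree_homogCoord_le i)

lemma monomial_mem_range_gramPoly {s : σ →₀ ℕ} (hs : s.degree ≤ 2) (c : R) :
    monomial s c ∈ LinearMap.range (gramPoly (σ := σ) (R := R)) := by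
  classical
  obtain ⟨i, j, hij⟩ := exists_homogCoord_mul_eq_prod_map_X (R := R) (t := s.toMultiset)
    (by rwa [Finsupp.card_toMultiset])
  refine ⟨Matrix.single i j c, ?_⟩
  rw [gramPoly_single, hij, ← monomial_one_eq_prod_map_X, smul_monomial, smul_eq_mul, mul_one]

lemma mem_range_gramPoly {p : MvPolynomial σ R} (hp : p.totalDegree ≤ 2) :
    p ∈ LinearMap.range (gramPoly (σ := σ) (R := R)) := by
  rw [p.as_sum]
  exact Submodule.sum_mem _ fun s hs =>
    monomial_mem_range_gramPoly ((le_totalDegree hs).trans hp) _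

lemma exists_isSymm_gramPoly_eq [Invertible (2 : R)] {p : MvPolynomial σ R}
    (hp : p.totalDegree ≤ 2) :
    ∃ N : Matrix (Option σ) (Option σ) R, N.IsSymm ∧ gramPoly N = p := by
  obtain ⟨N, rfl⟩ := mem_range_gramPoly hp
  refine ⟨⅟(2 : R) • (N + Nᵀ), (isSymm_add_transpose_self N).smul _, ?_⟩
  rw [map_smul, map_add, gramPoly_transpose, ← two_smul R, invOf_smul_smul]

lemma posSemidef_of_eval_gramPoly_nonneg {N : Matrix (Option σ) (Option σ) ℝ} (hN : N.IsSymm)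
    (hpos : ∀ y, 0 ≤ eval y (gramPoly N)) : N.PosSemidef := by
  refine .of_dotProduct_mulVec_nonneg (isHermitian_iff_isSymm.mpr hN) fun v => ?_
  refine dotProduct_mulVec_nonneg_of_apply_eq_one (i := none) (fun w hw => ?_) v
  exact (hpos (w ∘ some)).trans_eq (eval_gramPoly N w hw)

open scoped MatrixOrder in
theorem nonneg_quadratic_is_sos_general (p : MvPolynomial σ ℝ) (hdeg : p.totalDegree ≤ 2)
    (hpos : ∀ y : σ → ℝ, 0 ≤ eval y p) :
    ∃ l : Option σ → MvPolynomial σ ℝ, (∀ i, (l i).totalDegree ≤ 1) ∧ p = ∑ i, l i ^ 2 := by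
  classical
  obtain ⟨N, hN, rfl⟩ := exists_isSymm_gramPoly_eq hdeg
  have hpsd : N.PosSemidef := posSemidef_of_eval_gramPoly_nonneg hN hpos
  obtain ⟨B, rfl⟩ := CStarAlgebra.nonneg_iff_eq_star_mul_self.mp hpsd.nonneg
  exact ⟨B.map C *ᵥ homogCoord σ ℝ, totalDegree_map_C_mulVec_homogCoord_le B,
    gramPoly_transpose_mul_self B⟩

end Gram

/-- **Nonnegative quadratics are sums of `m+1` squares of linear polynomials**
(Fact 2.26). If `p` is a real polynomial in `m` variables of degree at most `2` with
`p(y) ≥ 0` for all `y ∈ ℝ^m`, then `p = l₁² + ⋯ + l_{m+1}²` for polynomials `lᵢ` of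
degree at most `1`. -/
theorem nonneg_quadratic_is_sos (m : ℕ) (p : MvPolynomial (Fin m) ℝ)
    (hdeg : p.totalDegree ≤ 2)
    (hpos : ∀ y : Fin m → ℝ, 0 ≤ MvPolynomial.eval y p) :
    ∃ l : Fin (m + 1) → MvPolynomial (Fin m) ℝ,
      (∀ i, (l i).totalDegree ≤ 1) ∧ p = ∑ i, (l i) ^ 2 := by
  obtain ⟨l, hl, hp⟩ := nonneg_quadratic_is_sos_general p hdeg hpos
  exact ⟨l ∘ finSuccEquiv m, fun i => hl _, hp.trans (Equiv.sum_comp _ _).symm⟩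
end
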